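/- arXiv:1005.0181 — 4 statements merged into one kernel-verified Lean document; each statement's English description precedes it below -/
import Mathlib

section
/- There exist a bounded limit-periodic potential V : ℤ → ℝ and a Schrödinger operator H with potential V such that: (a) for every E ∈ [−4,4], the complex number E belongs to σ(H); and (b) the set {E ∈ [−4,4] : liminf_{N→∞} (1/N)·log‖A_N(E,V)‖ = 0} contains a dense Gδ subset of [−4,4]. -/
open Filter Matrix

/-- The transfer matrix `A_N(E,V) = ∏_{n=1}^N [[E − V(N−n), −1],[1,0]]`,
with the `n = 1` factor leftmost. -/
noncomputable def transferMatrix (V : ℤ → ℝ) (E : ℝ) (N : ℕ) : Matrix (Fin 2) (Fin 2) ℝ :=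
  (((List.range N).map
    (fun n => !![E - V ((N : ℤ) - ((n : ℤ) + 1)), -1; (1 : ℝ), 0])).prod)

/-- Operator norm (Euclidean, i.e. ℓ²→ℓ²) of a 2×2 real matrix. -/
noncomputable def opNorm (A : Matrix (Fin 2) (Fin 2) ℝ) : ℝ :=
  ‖LinearMap.toContinuousLinearMap (Matrix.toEuclideanLin A)‖

/-- `H` is a Schrödinger operator on `ℓ²(ℤ,ℂ)` with potential `V`. -/
def IsSchrodingerOp (V : ℤ → ℝ)
    (H : lp (fun _ : ℤ => ℂ) 2 →L[ℂ] lp (fun _ : ℤ => ℂ) 2) : Prop :=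
  ∀ ψ : lp (fun _ : ℤ => ℂ) 2, ∀ n : ℤ,
    H ψ n = ψ (n + 1) + ψ (n - 1) + (V n : ℂ) * ψ n

/-- `V` is `p`-periodic. -/
def IsPeriodic (V : ℤ → ℝ) (p : ℕ) : Prop :=
  ∀ n : ℤ, V (n + (p : ℤ)) = V n

/-- `V` is limit-periodic: a uniform limit of periodic potentials. -/
def IsLimitPeriodic (V : ℤ → ℝ) : Prop :=
  ∃ (W : ℕ → ℤ → ℝ) (p : ℕ → ℕ),
    (∀ k, 1 ≤ p k ∧ IsPeriodic (W k) (p k)) ∧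
    (∀ ε > (0 : ℝ), ∃ K : ℕ, ∀ k ≥ K, ∀ n : ℤ, |V n - W k n| ≤ ε)

/-- `(1/N)·log‖A_N(E,V)‖`. -/
noncomputable def logNormRate (V : ℤ → ℝ) (E : ℝ) (N : ℕ) : ℝ :=
  (1 / (N : ℝ)) * Real.log (opNorm (transferMatrix V E N))

/-- Individual (upper) Lyapunov exponent `limsup_N (1/N) log‖A_N(E,V)‖`. -/
noncomputable def lyapExp (V : ℤ → ℝ) (E : ℝ) : ℝ :=
  Filter.limsup (fun N : ℕ => logNormRate V E N) Filter.atTop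

/-- Bottom of the (real trace of the) spectrum of `H`. -/
noncomputable def specInf (H : lp (fun _ : ℤ => ℂ) 2 →L[ℂ] lp (fun _ : ℤ => ℂ) 2) : ℝ :=
  sInf {x : ℝ | (x : ℂ) ∈ spectrum ℂ H}


theorem sf_herm {F : Type*} [NormedAddCommGroup F] [InnerProductSpace ℝ F] [FiniteDimensional ℝ F]
    (T : F →ₗ[ℝ] F) (hT : T.IsSymmetric) (ψ : F) (e η : ℝ) (hη : 0 ≤ η) (hψ : ψ ≠ 0)
    (h : ‖T ψ - e • ψ‖ ^ 2 ≤ η ^ 2 * ‖ψ‖ ^ 2) :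
    ∃ (μ : ℝ) (v : F), v ≠ 0 ∧ T v = μ • v ∧ |μ - e| ≤ η := by
  by_contra hcon
  push Not at hcon
  have hn : Module.finrank ℝ F = Module.finrank ℝ F := rfl
  set b := hT.eigenvectorBasis hn with hb
  have key : ∀ i, η < |hT.eigenvalues hn i - e| := by
    intro i
    have := hT.hasEigenvector_eigenvectorBasis hn i
    exact hcon _ _ this.2 this.apply_eq_smul
  have hc : ∀ i, b.repr (T ψ - e • ψ) i = (hT.eigenvalues hn i - e) * b.repr ψ i := by
    intro i
    have := hT.eigenvectorBasis_apply_self_apply hn ψ i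
    simp only [map_sub, map_smul, PiLp.sub_apply, PiLp.smul_apply, smul_eq_mul]
    rw [hb, this]
    simp only [RCLike.ofReal_real_eq_id, id_eq]
    ring
  rw [← b.repr.norm_map (T ψ - e • ψ), ← b.repr.norm_map ψ, EuclideanSpace.norm_sq_eq,
    EuclideanSpace.norm_sq_eq, Finset.mul_sum] at h
  have hne : ∃ i, b.repr ψ i ≠ 0 := by
    by_contra h0
    push Not at h0
    apply hψ
    apply b.repr.injective
    ext i
    simp [h0 i]
  obtain ⟨i0, hi0⟩ := hne
  have hsq : ∀ i, η ^ 2 < (hT.eigenvalues hn i - e) ^ 2 := by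
    intro i
    rw [← sq_abs (hT.eigenvalues hn i - e)]
    have := key i
    nlinarith
  have : ∑ i, η ^ 2 * ‖b.repr ψ i‖ ^ 2 < ∑ i, ‖b.repr (T ψ - e • ψ) i‖ ^ 2 := by
    apply Finset.sum_lt_sum
    · intro i _
      rw [hc, norm_mul, mul_pow, Real.norm_eq_abs (_ - _), sq_abs]
      exact mul_le_mul_of_nonneg_right (hsq i).le (by positivity)
    · refine ⟨i0, Finset.mem_univ _, ?_⟩
      rw [hc, norm_mul, mul_pow, Real.norm_eq_abs (_ - _), sq_abs]
      exact mul_lt_mul_of_pos_right (hsq i0) (by positivity)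
  linarith

theorem sf_per_mul {f : ℤ → ℝ} {p : ℕ} (hf : IsPeriodic f p) (n m : ℤ) :
    f (n + m * p) = f n := by
  have h : Function.Periodic f (p : ℤ) := hf
  have := h.int_mul m n
  simpa using this

theorem sf_per_mod {f : ℤ → ℝ} {p : ℕ} (hf : IsPeriodic f p) (n : ℤ) :
    f (n % p) = f n := by
  have := sf_per_mul hf (n % p) (n / p)
  rw [← this]
  congr 1
  have := Int.emod_add_mul_ediv n p
  linarith

theorem sf_sum_zmod (p : ℕ) [NeZero p] (f : ℕ → ℝ) :
    ∑ x : ZMod p, f x.val = ∑ i ∈ Finset.range p, f i := by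
  cases p with
  | zero => exact absurd rfl (NeZero.ne 0)
  | succ n => exact Fin.sum_univ_eq_sum_range f (n + 1)

/-- the periodic Schrodinger operator on `ZMod p` -/
noncomputable def sfT (p : ℕ) (W : ZMod p → ℝ) :
    EuclideanSpace ℝ (ZMod p) →ₗ[ℝ] EuclideanSpace ℝ (ZMod p) where
  toFun f := WithLp.toLp 2 (fun x => f (x + 1) + f (x - 1) + W x * f x)
  map_add' f g := by
    ext x
    simp
    ring
  map_smul' c f := by
    ext x
    simp
    ring

theorem sfT_symm (p : ℕ) [NeZero p] (W : ZMod p → ℝ) : (sfT p W).IsSymmetric := by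
  intro f g
  simp only [sfT, LinearMap.coe_mk, AddHom.coe_mk, PiLp.inner_apply, RCLike.inner_apply,
    conj_trivial]
  have h1 : ∑ x, g x * f (x + 1) = ∑ x, g (x - 1) * f x := by
    rw [← Equiv.sum_comp (Equiv.subRight (1 : ZMod p))]
    simp
  have h2 : ∑ x, g x * f (x - 1) = ∑ x, g (x + 1) * f x := by
    rw [← Equiv.sum_comp (Equiv.addRight (1 : ZMod p))]
    simp
  simp only [mul_add, add_mul, Finset.sum_add_distrib, h1, h2]
  have h3 : ∑ x, g x * (W x * f x) = ∑ x, W x * g x * f x :=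
    Finset.sum_congr rfl (fun x _ => by ring)
  rw [h3]
  ring

theorem sf_per_eig (p : ℕ) [NeZero p] (W ψ : ℤ → ℝ) (hW : IsPeriodic W p) (hψ : IsPeriodic ψ p)
    (e η : ℝ) (hη : 0 ≤ η) (hpos : 0 < ∑ i ∈ Finset.range p, ψ i ^ 2)
    (h : ∑ i ∈ Finset.range p, (ψ (i + 1) + ψ (i - 1) + W i * ψ i - e * ψ i) ^ 2
      ≤ η ^ 2 * ∑ i ∈ Finset.range p, ψ i ^ 2) :
    ∃ (e' : ℝ) (u : ℤ → ℝ), |e' - e| ≤ η ∧ IsPeriodic u p ∧ (∃ n, u n ≠ 0) ∧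
      ∀ n, u (n + 1) + u (n - 1) + W n * u n = e' * u n := by
  have hval : ∀ (f : ℤ → ℝ), IsPeriodic f p → ∀ n : ℤ, f ((n : ZMod p).val : ℤ) = f n := by
    intro f hf n
    rw [ZMod.val_intCast, sf_per_mod hf]
  set φ : EuclideanSpace ℝ (ZMod p) := WithLp.toLp 2 (fun x => ψ (x.val : ℤ)) with hφ
  have hn : ‖φ‖ ^ 2 = ∑ i ∈ Finset.range p, ψ i ^ 2 := by
    rw [EuclideanSpace.norm_sq_eq, ← sf_sum_zmod p (fun i => ψ (i : ℤ) ^ 2)]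
    simp [hφ]
  have hr : ‖sfT p (fun x => W (x.val : ℤ)) φ - e • φ‖ ^ 2 =
      ∑ i ∈ Finset.range p, (ψ (i + 1) + ψ (i - 1) + W i * ψ i - e * ψ i) ^ 2 := by
    rw [EuclideanSpace.norm_sq_eq, ← sf_sum_zmod p
      (fun i : ℕ => (ψ ((i : ℤ) + 1) + ψ ((i : ℤ) - 1) + W i * ψ i - e * ψ i) ^ 2)]
    apply Finset.sum_congr rfl
    intro x _
    have e1 : ψ ((x + 1).val : ℤ) = ψ ((x.val : ℤ) + 1) := by
      rw [← hval ψ hψ ((x.val : ℤ) + 1)]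
      simp
    have e2 : ψ ((x - 1).val : ℤ) = ψ ((x.val : ℤ) - 1) := by
      rw [← hval ψ hψ ((x.val : ℤ) - 1)]
      simp
    simp only [hφ, sfT, LinearMap.coe_mk, AddHom.coe_mk, PiLp.sub_apply, PiLp.smul_apply,
      smul_eq_mul, Real.norm_eq_abs, sq_abs, e1, e2]
  have hne : φ ≠ 0 := by
    intro h0
    rw [h0] at hn
    simp at hn
    linarith
  obtain ⟨μ, v, hv, hTv, hμ⟩ := sf_herm _ (sfT_symm p (fun x => W (x.val : ℤ))) φ e η hη hne
    (by rw [hr, hn]; exact h)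
  refine ⟨μ, fun n => v (n : ZMod p), hμ, ?_, ?_, ?_⟩
  · intro n
    simp
  · by_contra h0
    push Not at h0
    apply hv
    ext x
    have := h0 (x.val : ℤ)
    simpa using this
  · intro n
    have := congrArg (fun w : EuclideanSpace ℝ (ZMod p) => w (n : ZMod p)) hTv
    simp only [sfT, LinearMap.coe_mk, AddHom.coe_mk, PiLp.smul_apply, smul_eq_mul] at this
    rw [hval W hW] at this
    push_cast
    exact this

theorem sf_sum_mul (a b : ℕ) (f : ℕ → ℝ) :
    ∑ i ∈ Finset.range (a * b), f i =
      ∑ q ∈ Finset.range a, ∑ r ∈ Finset.range b, f (q * b + r) := by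
  induction a with
  | zero => simp
  | succ n ih => rw [Nat.succ_mul, Finset.sum_range_add, ih, Finset.sum_range_succ]

theorem sf_le_S (p : ℕ) (hp : 0 < p) (u : ℤ → ℝ) (hu : IsPeriodic u p) (n : ℤ) :
    u n ^ 2 ≤ ∑ i ∈ Finset.range p, u i ^ 2 := by
  have h0 : 0 ≤ n % (p : ℤ) := Int.emod_nonneg _ (by positivity)
  have h1 : n % (p : ℤ) < p := Int.emod_lt_of_pos _ (by positivity)
  rw [← sf_per_mod hu n, ← Int.toNat_of_nonneg h0]
  exact Finset.single_le_sum (f := fun i : ℕ => u (i : ℤ) ^ 2) (fun i _ => sq_nonneg _)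
    (Finset.mem_range.2 (by omega))

theorem sf_sum_per (p L : ℕ) (u : ℤ → ℝ) (hu : IsPeriodic u p) (c : ℤ) :
    ∑ i ∈ Finset.range (p * L), u (c * p + i) ^ 2 = L * ∑ i ∈ Finset.range p, u i ^ 2 := by
  rw [mul_comm p L, sf_sum_mul L p (fun i : ℕ => u (c * p + i) ^ 2)]
  have : ∀ q ∈ Finset.range L, ∑ r ∈ Finset.range p, u (c * p + ((q * p + r : ℕ) : ℤ)) ^ 2 =
      ∑ i ∈ Finset.range p, u i ^ 2 := by
    intro q _
    apply Finset.sum_congr rfl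
    intro r _
    rw [← sf_per_mul hu r (c + q)]
    congr 2
    push_cast
    ring
  rw [Finset.sum_congr rfl this]
  simp

/-- shift pattern -/
noncomputable def sfs (r : ℤ) : ℝ := if r = 1 then 1 else if r = 2 then -1 else 0

theorem sf_step (p L : ℕ) (hp : 0 < p) (hL : 0 < L) (W u : ℤ → ℝ) (hW : IsPeriodic W p)
    (hu : IsPeriodic u p) (hne : ∃ n, u n ≠ 0) (e : ℝ)
    (heq : ∀ n, u (n + 1) + u (n - 1) + W n * u n = e * u n) (h : ℝ) (j : ℕ) (hj : j < 3)
    (η : ℝ) (hη : 0 ≤ η) (hLη : 24 ≤ η ^ 2 * L) :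
    ∃ (e' : ℝ) (u' : ℤ → ℝ), |e' - (e + h * sfs j)| ≤ η ∧ IsPeriodic u' (3 * (p * L)) ∧
      (∃ n, u' n ≠ 0) ∧ ∀ n, u' (n + 1) + u' (n - 1) +
        (W n + h * sfs ((n / ((p * L : ℕ) : ℤ)) % 3)) * u' n = e' * u' n := by
  set M : ℕ := p * L with hM
  have hMpos : 0 < M := Nat.mul_pos hp hL
  have hMz : (0 : ℤ) < M := by exact_mod_cast hMpos
  have : NeZero (3 * M) := ⟨by omega⟩
  set S := ∑ i ∈ Finset.range p, u i ^ 2 with hS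
  have hle : ∀ n, u n ^ 2 ≤ S := sf_le_S p hp u hu
  have hSpos : 0 < S := by
    obtain ⟨n, hn⟩ := hne
    exact lt_of_lt_of_le (by positivity) (hle n)
  have hdiv : ∀ n : ℤ, ((n + ((3 * M : ℕ) : ℤ)) / (M : ℤ)) % 3 = (n / (M : ℤ)) % 3 := by
    intro n
    push_cast
    rw [Int.add_mul_ediv_right _ _ hMz.ne']
    omega
  have huM : IsPeriodic u (3 * M) := by
    intro n
    have := sf_per_mul hu n (3 * L)
    rw [← this]
    congr 2
    rw [hM]
    push_cast
    ring
  have hWM : IsPeriodic W (3 * M) := by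
    intro n
    have := sf_per_mul hW n (3 * L)
    rw [← this]
    congr 2
    rw [hM]
    push_cast
    ring
  set ψ : ℤ → ℝ := fun n => if (n / (M : ℤ)) % 3 = j then u n else 0 with hψ
  have hψper : IsPeriodic ψ (3 * M) := by
    intro n
    simp only [hψ, hdiv, huM n]
  have hqr : ∀ q r : ℕ, r < M → (((q * M + r : ℕ) : ℤ) / (M : ℤ)) = q := by
    intro q r hr
    have : (q * M + r) / M = q := by
      rw [add_comm, Nat.add_mul_div_right _ _ hMpos, Nat.div_eq_of_lt hr, zero_add]
    exact_mod_cast this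
  have hqm : ∀ q r : ℕ, r < M → (q * M + r) % M = r := by
    intro q r hr
    rw [add_comm, Nat.add_mul_mod_self_right, Nat.mod_eq_of_lt hr]
  have hψsum : ∑ i ∈ Finset.range (3 * M), ψ i ^ 2 = L * S := by
    rw [sf_sum_mul 3 M (fun i : ℕ => ψ i ^ 2)]
    have : ∀ q ∈ Finset.range 3, ∑ r ∈ Finset.range M, ψ ((q * M + r : ℕ) : ℤ) ^ 2 =
        if q = j then (L * S : ℝ) else 0 := by
      intro q hq
      rw [Finset.mem_range] at hq
      split_ifs with hqj
      · rw [hS, ← sf_sum_per p L u hu (q * L), ← hM]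
        apply Finset.sum_congr rfl
        intro r hr
        rw [Finset.mem_range] at hr
        simp only [hψ]
        rw [hqr q r hr, if_pos (by omega), hM]
        congr 2
        push_cast
        ring
      · apply Finset.sum_eq_zero
        intro r hr
        rw [Finset.mem_range] at hr
        simp only [hψ]
        rw [hqr q r hr, if_neg (by omega)]
        simp
    rw [Finset.sum_congr rfl this]
    simp [hj]
  refine sf_per_eig (3 * M) _ ψ ?_ hψper _ η hη ?_ ?_
  · intro n
    simp only [hdiv, hWM n]
  · rw [hψsum]
    positivity
  · rw [hψsum]
    have hb : ∀ i ∈ Finset.range (3 * M), (ψ (i + 1) + ψ (i - 1) +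
        (W i + h * sfs (((i : ℤ) / (M : ℤ)) % 3)) * ψ i - (e + h * sfs j) * ψ i) ^ 2 ≤
        (if i % M = 0 then 4 * S else 0) + (if i % M = M - 1 then 4 * S else 0) := by
      intro i _
      have hi := heq i
      have a1 := hle ((i : ℤ) + 1)
      have a2 := hle ((i : ℤ) - 1)
      set a := u ((i : ℤ) + 1)
      set b := u ((i : ℤ) - 1)
      have hab : (a + b) ^ 2 ≤ 4 * S := by nlinarith [sq_nonneg (a - b)]
      have ha : a ^ 2 ≤ 4 * S := by linarith
      have hb : b ^ 2 ≤ 4 * S := by linarith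
      by_cases hmid : i % M ≠ 0 ∧ i % M ≠ M - 1
      · have hdm := Nat.div_add_mod i M
        have hlt := Nat.mod_lt i hMpos
        have hq0 : (i : ℤ) / (M : ℤ) = ((i / M : ℕ) : ℤ) := by push_cast; rfl
        have hq1 : ((i : ℤ) + 1) / (M : ℤ) = ((i / M : ℕ) : ℤ) := by
          have := hqr (i / M) (i % M + 1) (by omega)
          rw [← this]
          congr 1
          have : (i / M) * M + (i % M + 1) = i + 1 := by
            rw [mul_comm]; omega
          rw [this]
          push_cast; rfl
        have hq2 : ((i : ℤ) - 1) / (M : ℤ) = ((i / M : ℕ) : ℤ) := by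
          have := hqr (i / M) (i % M - 1) (by omega)
          rw [← this]
          congr 1
          have : (i / M) * M + (i % M - 1) + 1 = i := by
            rw [mul_comm]; omega
          omega
        rw [if_neg hmid.1, if_neg hmid.2]
        simp only [hψ, hq0, hq1, hq2]
        split_ifs with hc
        · rw [hc]
          have : a + b + (W i + h * sfs j) * u i - (e + h * sfs j) * u i = 0 := by
            linear_combination hi
          rw [this]
          simp
        · simp
      · have hR : 4 * S ≤ (if i % M = 0 then 4 * S else 0) +
            (if i % M = M - 1 then 4 * S else 0) := by
          split_ifs <;> first | linarith | (exfalso; tauto)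
        refine le_trans ?_ hR
        simp only [hψ]
        by_cases hc : ((i : ℤ) / (M : ℤ)) % 3 = j
        · have hW2 : (W i + h * sfs (((i : ℤ) / (M : ℤ)) % 3)) * u i - (e + h * sfs j) * u i
              = - a - b := by
            rw [hc]
            linear_combination hi
          rw [if_pos hc, add_sub_assoc, hW2]
          split_ifs
          · have h0 : (a + b + (-a - b)) ^ 2 = 0 := by ring
            exact h0.le.trans (by linarith)
          · calc _ = b ^ 2 := by ring
              _ ≤ _ := hb
          · calc _ = a ^ 2 := by ring
              _ ≤ _ := ha
          · calc _ = (a + b) ^ 2 := by ring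
              _ ≤ _ := hab
        · rw [if_neg hc]
          split_ifs
          · calc _ = (a + b) ^ 2 := by ring
              _ ≤ _ := hab
          · calc _ = a ^ 2 := by ring
              _ ≤ _ := ha
          · calc _ = b ^ 2 := by ring
              _ ≤ _ := hb
          · ring_nf; linarith
    refine (Finset.sum_le_sum hb).trans ?_
    rw [sf_sum_mul 3 M]
    have : ∀ q ∈ Finset.range 3, ∑ r ∈ Finset.range M,
        ((if (q * M + r) % M = 0 then 4 * S else 0) +
          (if (q * M + r) % M = M - 1 then 4 * S else 0)) = 8 * S := by
      intro q _
      have : ∀ r ∈ Finset.range M,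
        ((if (q * M + r) % M = 0 then 4 * S else 0) +
          (if (q * M + r) % M = M - 1 then 4 * S else 0)) =
          (if r = 0 then 4 * S else 0) + (if r = M - 1 then 4 * S else 0) := by
        intro r hr
        rw [hqm q r (Finset.mem_range.1 hr)]
      rw [Finset.sum_congr rfl this, Finset.sum_add_distrib, Finset.sum_ite_eq',
        Finset.sum_ite_eq', if_pos (by simpa using hMpos), if_pos (by simp; omega)]
      ring
    rw [Finset.sum_congr rfl this]
    simp
    nlinarith

/-- one step matrix -/
def sfM (a : ℝ) : Matrix (Fin 2) (Fin 2) ℝ := !![a, -1; (1 : ℝ), 0]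

theorem sf_tm_zero (V : ℤ → ℝ) (E : ℝ) : transferMatrix V E 0 = 1 := by
  simp [transferMatrix]

theorem sf_tm_succ (V : ℤ → ℝ) (E : ℝ) (N : ℕ) :
    transferMatrix V E (N + 1) = sfM (E - V N) * transferMatrix V E N := by
  unfold transferMatrix sfM
  have hc : ∀ l : List ℕ, (l.flatMap fun (a : ℕ) => (pure (a : ℤ) : List ℤ)) =
      l.map (fun a : ℕ => (a : ℤ)) := fun l => List.flatMap_pure_eq_map _ _
  simp only [List.bind_eq_flatMap, hc, List.map_map]
  rw [List.range_succ_eq_map, List.map_cons, List.prod_cons, List.map_map]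
  congr 1
  · simp
  · congr 2
    funext n
    simp

theorem sf_tm_congr (V V' : ℤ → ℝ) (E : ℝ) (N : ℕ) (h : ∀ n : ℕ, n < N → V n = V' n) :
    transferMatrix V E N = transferMatrix V' E N := by
  induction N with
  | zero => simp [sf_tm_zero]
  | succ N ih =>
    rw [sf_tm_succ, sf_tm_succ, ih (fun n hn => h n (by omega)), h N (by omega)]

theorem sf_tm_add (V : ℤ → ℝ) (E : ℝ) (p : ℕ) (hV : IsPeriodic V p) (N : ℕ) :
    transferMatrix V E (N + p) = transferMatrix V E N * transferMatrix V E p := by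
  induction N with
  | zero => simp [sf_tm_zero]
  | succ N ih =>
    rw [show N + 1 + p = (N + p) + 1 by ring, sf_tm_succ, sf_tm_succ, ih, mul_assoc]
    congr 3
    push_cast
    rw [hV]

theorem sf_tm_pow (V : ℤ → ℝ) (E : ℝ) (p : ℕ) (hV : IsPeriodic V p) (L : ℕ) :
    transferMatrix V E (p * L) = transferMatrix V E p ^ L := by
  induction L with
  | zero => simp [sf_tm_zero]
  | succ L ih => rw [Nat.mul_succ, sf_tm_add V E p hV, ih, pow_succ]

theorem sf_tm_det (V : ℤ → ℝ) (E : ℝ) (N : ℕ) : (transferMatrix V E N).det = 1 := by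
  induction N with
  | zero => simp [sf_tm_zero]
  | succ N ih => rw [sf_tm_succ, Matrix.det_mul, ih]; simp [sfM]

theorem sf_tm_cont (V : ℤ → ℝ) (N : ℕ) : Continuous (fun E => transferMatrix V E N) := by
  induction N with
  | zero => simp only [sf_tm_zero]; fun_prop
  | succ N ih =>
    simp only [sf_tm_succ]
    refine Continuous.mul ?_ ih
    unfold sfM
    refine continuous_matrix ?_
    intro i j
    fin_cases i <;> fin_cases j <;> simp <;> fun_prop

theorem sf_tm_sol (V u : ℤ → ℝ) (E : ℝ)
    (heq : ∀ n, u (n + 1) + u (n - 1) + V n * u n = E * u n) (N : ℕ) :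
    transferMatrix V E N *ᵥ ![u 0, u (-1)] = ![u N, u (N - 1)] := by
  induction N with
  | zero => simp [sf_tm_zero]
  | succ N ih =>
    rw [sf_tm_succ, ← Matrix.mulVec_mulVec, ih]
    ext i
    fin_cases i
    · simp [sfM, Matrix.mulVec, dotProduct, Fin.sum_univ_two]
      linear_combination (-1 : ℝ) * heq N
    · simp [sfM, Matrix.mulVec, dotProduct, Fin.sum_univ_two]

theorem sf_sol_ne (V u : ℤ → ℝ) (E : ℝ)
    (heq : ∀ n, u (n + 1) + u (n - 1) + V n * u n = E * u n) (hne : ∃ n, u n ≠ 0) :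
    ![u 0, u (-1)] ≠ 0 := by
  intro h
  have h0 : u 0 = 0 := congrFun h 0
  have h1 : u (-1) = 0 := congrFun h 1
  obtain ⟨n, hn⟩ := hne
  apply hn
  have key : ∀ n : ℤ, u n = 0 ∧ u (n - 1) = 0 := by
    intro n
    induction n using Int.induction_on with
    | zero => exact ⟨h0, by simpa using h1⟩
    | succ i ih =>
      have := heq i
      rw [ih.1, ih.2] at this
      refine ⟨by linarith, ?_⟩
      simpa using ih.1
    | pred i ih =>
      have := heq (-(i : ℤ) - 1)
      rw [sub_add_cancel, ih.1, ih.2] at this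
      exact ⟨ih.2, by linarith⟩
  exact (key n).1

theorem sf_unip (A : Matrix (Fin 2) (Fin 2) ℝ) (hdet : A.det = 1) (v : Fin 2 → ℝ) (hv : v ≠ 0)
    (hA : A *ᵥ v = v) (m : ℕ) : A ^ m = 1 + (m : ℝ) • (A - 1) := by
  have h1 : (A - 1).det = 0 := by
    rw [← Matrix.exists_mulVec_eq_zero_iff]
    exact ⟨v, hv, by rw [Matrix.sub_mulVec, hA, Matrix.one_mulVec, sub_self]⟩
  rw [Matrix.det_fin_two] at hdet h1
  simp at h1
  have h2 : (A - 1) * (A - 1) = 0 := by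
    ext i j
    fin_cases i <;> fin_cases j <;> simp [Matrix.mul_apply, Fin.sum_univ_two]
    · linear_combination (A 0 0 - 1) * (hdet - h1) - h1
    · linear_combination (A 0 1) * (hdet - h1)
    · linear_combination (A 1 0) * (hdet - h1)
    · linear_combination (A 1 1 - 1) * (hdet - h1) - h1
  induction m with
  | zero => simp
  | succ m ih =>
    have h3 : A = 1 + (A - 1) := by abel
    rw [pow_succ, ih]
    nth_rewrite 2 [h3]
    rw [add_mul, mul_add, mul_add, smul_mul_assoc, smul_mul_assoc, h2]
    push_cast
    simp [add_smul]
    abel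

theorem sf_opNorm_eq (A : Matrix (Fin 2) (Fin 2) ℝ) :
    opNorm A = @norm _ (Matrix.instL2OpNormedRing (n := Fin 2) (𝕜 := ℝ)).toNorm A := rfl

open scoped Matrix.Norms.L2Operator in
theorem sf_opNorm_cont : Continuous opNorm := by
  have : (opNorm : Matrix (Fin 2) (Fin 2) ℝ → ℝ) = fun A => ‖A‖ := by
    funext A
    exact sf_opNorm_eq A
  rw [this]
  exact continuous_norm

theorem sf_one_le_opNorm (A : Matrix (Fin 2) (Fin 2) ℝ) (hdet : A.det = 1) : 1 ≤ opNorm A := by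
  have hcol : ∀ j, A 0 j ^ 2 + A 1 j ^ 2 ≤ opNorm A ^ 2 := by
    intro j
    have := (LinearMap.toContinuousLinearMap (Matrix.toEuclideanLin A)).le_opNorm
      (EuclideanSpace.single j (1 : ℝ))
    rw [show ‖EuclideanSpace.single j (1 : ℝ)‖ = 1 by simp, mul_one] at this
    have h2 := pow_le_pow_left₀ (norm_nonneg _) this 2
    rw [EuclideanSpace.norm_sq_eq] at h2
    simpa [Fin.sum_univ_two, opNorm] using h2
  have h0 := hcol 0
  have h1 := hcol 1
  rw [Matrix.det_fin_two] at hdet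
  have hn : 0 ≤ opNorm A := norm_nonneg _
  have : 1 ≤ (opNorm A ^ 2) * (opNorm A ^ 2) := by
    calc (1 : ℝ) = (A 0 0 * A 1 1 - A 0 1 * A 1 0) ^ 2 := by rw [hdet]; norm_num
      _ ≤ (A 0 0 ^ 2 + A 1 0 ^ 2) * (A 0 1 ^ 2 + A 1 1 ^ 2) := by
        nlinarith [sq_nonneg (A 0 0 * A 0 1 + A 1 0 * A 1 1)]
      _ ≤ _ := mul_le_mul h0 h1 (by positivity) (by positivity)
  by_contra hlt
  push Not at hlt
  have h3 : opNorm A ^ 2 < 1 := by nlinarith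
  nlinarith [sq_nonneg (opNorm A)]

open scoped Matrix.Norms.L2Operator in
theorem sf_growth : ∃ K : ℝ, 1 ≤ K ∧ ∀ (V u : ℤ → ℝ) (e : ℝ) (p L : ℕ),
    IsPeriodic V p → IsPeriodic u p → (∃ n, u n ≠ 0) →
    (∀ n, u (n + 1) + u (n - 1) + V n * u n = e * u n) → (∀ n, |e - V n| ≤ 40) →
    opNorm (transferMatrix V e (p * L)) ≤ 1 + L * (K ^ p + 1) := by
  refine ⟨1 + 40 * ‖(!![1, 0; 0, 0] : Matrix (Fin 2) (Fin 2) ℝ)‖ +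
    ‖(!![0, -1; 1, 0] : Matrix (Fin 2) (Fin 2) ℝ)‖, ?_, ?_⟩
  · linarith [norm_nonneg (!![1, 0; 0, 0] : Matrix (Fin 2) (Fin 2) ℝ),
      norm_nonneg (!![0, -1; 1, 0] : Matrix (Fin 2) (Fin 2) ℝ)]
  set K := 1 + 40 * ‖(!![1, 0; 0, 0] : Matrix (Fin 2) (Fin 2) ℝ)‖ +
    ‖(!![0, -1; 1, 0] : Matrix (Fin 2) (Fin 2) ℝ)‖ with hK
  have hK0 : 0 ≤ K := by positivity
  intro V u e p L hV hu hne heq hb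
  have hstep : ∀ a : ℝ, |a| ≤ 40 → ‖sfM a‖ ≤ K := by
    intro a ha
    have : sfM a = a • !![1, 0; 0, 0] + !![0, -1; 1, 0] := by
      ext i j
      fin_cases i <;> fin_cases j <;> simp [sfM]
    rw [this]
    refine (norm_add_le _ _).trans ?_
    rw [norm_smul, Real.norm_eq_abs, hK]
    have := mul_le_mul_of_nonneg_right ha
      (norm_nonneg (!![1, 0; 0, 0] : Matrix (Fin 2) (Fin 2) ℝ))
    linarith
  have hone : ‖(1 : Matrix (Fin 2) (Fin 2) ℝ)‖ = 1 := norm_one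
  have hA : ∀ N, ‖transferMatrix V e N‖ ≤ K ^ N := by
    intro N
    induction N with
    | zero => rw [sf_tm_zero, hone]; simp
    | succ N ih =>
      rw [sf_tm_succ, pow_succ']
      exact (norm_mul_le _ _).trans (mul_le_mul (hstep _ (hb N)) ih (norm_nonneg _) hK0)
  have hfix : transferMatrix V e p *ᵥ ![u 0, u (-1)] = ![u 0, u (-1)] := by
    rw [sf_tm_sol V u e heq]
    have h0 := hu 0
    have h1 := hu (-1)
    rw [zero_add] at h0
    rw [h0, ← h1]
    congr 3
  have hpow := sf_unip _ (sf_tm_det V e p) _ (sf_sol_ne V u e heq hne) hfix L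
  change ‖transferMatrix V e (p * L)‖ ≤ _
  rw [sf_tm_pow V e p hV, hpow]
  refine (norm_add_le _ _).trans ?_
  rw [hone, norm_smul, Real.norm_natCast]
  have : ‖transferMatrix V e p - 1‖ ≤ K ^ p + 1 :=
    (norm_sub_le _ _).trans (by rw [hone]; linarith [hA p])
  gcongr

theorem sf_wshift (σ : ℤ ≃ ℤ) (w : ℤ → ℂ) (C : ℝ) (hw : ∀ n, ‖w n‖ ≤ C) :
    ∃ Q : lp (fun _ : ℤ => ℂ) 2 →L[ℂ] lp (fun _ : ℤ => ℂ) 2,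
      ∀ ψ : lp (fun _ : ℤ => ℂ) 2, ∀ n : ℤ, Q ψ n = w n * ψ (σ n) := by
  have h2 : (0 : ℝ) < (2 : ENNReal).toReal := by norm_num
  have h2' : (2 : ENNReal).toReal = (2 : ℝ) := by norm_num
  have hC : 0 ≤ C := (norm_nonneg _).trans (hw 0)
  have hsum : ∀ ψ : lp (fun _ : ℤ => ℂ) 2, Summable (fun n => ‖ψ (σ n)‖ ^ (2 : ℝ)) := by
    intro ψ
    have := (lp.memℓp ψ).summable h2
    rw [h2'] at this
    exact this.comp_injective σ.injective
  have hle : ∀ ψ : lp (fun _ : ℤ => ℂ) 2, ∀ n, ‖w n * ψ (σ n)‖ ^ (2 : ℝ) ≤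
      C ^ (2 : ℝ) * ‖ψ (σ n)‖ ^ (2 : ℝ) := by
    intro ψ n
    rw [norm_mul, Real.mul_rpow (norm_nonneg _) (norm_nonneg _)]
    exact mul_le_mul_of_nonneg_right
      (Real.rpow_le_rpow (norm_nonneg _) (hw n) (by norm_num)) (by positivity)
  have hsum2 : ∀ ψ : lp (fun _ : ℤ => ℂ) 2, Summable (fun n => ‖w n * ψ (σ n)‖ ^ (2 : ℝ)) := by
    intro ψ
    exact Summable.of_nonneg_of_le (fun n => by positivity) (hle ψ) ((hsum ψ).mul_left _)
  have hmem : ∀ ψ : lp (fun _ : ℤ => ℂ) 2,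
      Memℓp (E := fun _ : ℤ => ℂ) (fun n => w n * ψ (σ n)) 2 := by
    intro ψ
    apply memℓp_gen
    rw [h2']
    exact hsum2 ψ
  let T : lp (fun _ : ℤ => ℂ) 2 →ₗ[ℂ] lp (fun _ : ℤ => ℂ) 2 :=
    { toFun := fun ψ => ⟨fun n => w n * ψ (σ n), hmem ψ⟩
      map_add' := by
        intro f g
        apply lp.ext
        funext n
        simp [mul_add]
        rfl
      map_smul' := by
        intro c f
        apply lp.ext
        funext n
        simp
        ring }
  refine ⟨T.mkContinuous C ?_, fun ψ n => rfl⟩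
  intro ψ
  apply lp.norm_le_of_tsum_le h2 (by positivity)
  rw [Real.mul_rpow hC (norm_nonneg _), lp.norm_rpow_eq_tsum h2, h2', ← tsum_mul_left]
  have e1 : ∑' n, C ^ (2 : ℝ) * ‖ψ n‖ ^ (2 : ℝ) = ∑' n, C ^ (2 : ℝ) * ‖ψ (σ n)‖ ^ (2 : ℝ) :=
    (Equiv.tsum_eq σ (fun n => C ^ (2 : ℝ) * ‖ψ n‖ ^ (2 : ℝ))).symm
  rw [e1]
  exact (hsum2 ψ).tsum_le_tsum (hle ψ) ((hsum ψ).mul_left _)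

theorem sf_exists_H (V : ℤ → ℝ) (C : ℝ) (hV : ∀ n, |V n| ≤ C) :
    ∃ H : lp (fun _ : ℤ => ℂ) 2 →L[ℂ] lp (fun _ : ℤ => ℂ) 2, IsSchrodingerOp V H := by
  obtain ⟨Q1, h1⟩ := sf_wshift (Equiv.addRight 1) (fun _ => 1) 1 (by simp)
  obtain ⟨Q2, h2⟩ := sf_wshift (Equiv.subRight 1) (fun _ => 1) 1 (by simp)
  obtain ⟨Q3, h3⟩ := sf_wshift (Equiv.refl ℤ) (fun n => (V n : ℂ)) C
    (by intro n; simpa using hV n)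
  refine ⟨Q1 + Q2 + Q3, ?_⟩
  intro ψ n
  have : (Q1 + Q2 + Q3) ψ n = Q1 ψ n + Q2 ψ n + Q3 ψ n := rfl
  rw [this, h1, h2, h3]
  simp

theorem sf_spec (H : lp (fun _ : ℤ => ℂ) 2 →L[ℂ] lp (fun _ : ℤ => ℂ) 2) (E : ℂ)
    (h : ∀ ε > (0 : ℝ), ∃ ψ : lp (fun _ : ℤ => ℂ) 2, ψ ≠ 0 ∧ ‖H ψ - E • ψ‖ ≤ ε * ‖ψ‖) :
    E ∈ spectrum ℂ H := by
  rw [spectrum.mem_iff]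
  rintro ⟨B, hB⟩
  set R : lp (fun _ : ℤ => ℂ) 2 →L[ℂ] lp (fun _ : ℤ => ℂ) 2 := ↑(B⁻¹) with hR
  have hinv : R * (algebraMap ℂ (lp (fun _ : ℤ => ℂ) 2 →L[ℂ] lp (fun _ : ℤ => ℂ) 2) E - H) = 1 := by
    rw [← hB, hR]
    exact Units.inv_mul B
  obtain ⟨ψ, hψ, hle⟩ := h (1 / (‖R‖ + 1) / 2) (by positivity)
  have h1 : R (E • ψ - H ψ) = ψ := by
    have := congrArg (fun T : lp (fun _ : ℤ => ℂ) 2 →L[ℂ] lp (fun _ : ℤ => ℂ) 2 => T ψ) hinv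
    simpa [Algebra.algebraMap_eq_smul_one] using this
  have h2 := R.le_opNorm (E • ψ - H ψ)
  rw [h1, ← norm_neg (E • ψ - H ψ), neg_sub] at h2
  have hpos : 0 < ‖ψ‖ := norm_pos_iff.2 hψ
  have h3 : ‖R‖ * ‖H ψ - E • ψ‖ ≤ (‖R‖ + 1) * (1 / (‖R‖ + 1) / 2 * ‖ψ‖) := by
    gcongr
    linarith
  have h4 : (‖R‖ + 1) * (1 / (‖R‖ + 1) / 2 * ‖ψ‖) = ‖ψ‖ / 2 := by
    have : ‖R‖ + 1 ≠ 0 := by positivity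
    field_simp
  linarith

theorem sf_weyl (V : ℤ → ℝ) (H : lp (fun _ : ℤ => ℂ) 2 →L[ℂ] lp (fun _ : ℤ => ℂ) 2)
    (hH : IsSchrodingerOp V H) (u : ℤ → ℝ) (e S η : ℝ) (M L : ℕ) (hS : 0 < S) (hη : 0 ≤ η)
    (hL : 16 ≤ η ^ 2 * L)
    (heq : ∀ n : ℤ, 0 ≤ n → n < M → u (n + 1) + u (n - 1) + V n * u n = e * u n)
    (hle : ∀ n, u n ^ 2 ≤ S) (hsum : ∑ i ∈ Finset.range M, u i ^ 2 = L * S) :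
    ∃ ψ : lp (fun _ : ℤ => ℂ) 2, ψ ≠ 0 ∧ ‖H ψ - (e : ℂ) • ψ‖ ≤ η * ‖ψ‖ := by
  have h2 : (0 : ℝ) < (2 : ENNReal).toReal := by norm_num
  have h2' : (2 : ENNReal).toReal = (2 : ℝ) := by norm_num
  set f : ℤ → ℂ := fun n => if 0 ≤ n ∧ n < M then (u n : ℂ) else 0 with hf
  set s : Finset ℤ := (Finset.range M).map Nat.castEmbedding with hs
  have hfs : ∀ n ∉ s, ‖f n‖ ^ (2 : ℝ) = 0 := by
    intro n hn
    have : ¬ (0 ≤ n ∧ n < M) := by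
      intro h
      apply hn
      rw [hs, Finset.mem_map]
      exact ⟨n.toNat, by rw [Finset.mem_range]; omega, by simp [h.1]⟩
    simp only [hf]
    rw [if_neg this]
    simp
  have hmem : Memℓp (E := fun _ : ℤ => ℂ) f 2 := by
    apply memℓp_gen
    rw [h2']
    exact summable_of_ne_finset_zero hfs
  set ψ : lp (fun _ : ℤ => ℂ) 2 := ⟨f, hmem⟩ with hψ
  have hψn : ∀ n, ψ n = f n := fun n => rfl
  have hnorm : ‖ψ‖ ^ 2 = L * S := by
    have h := lp.norm_rpow_eq_tsum h2 ψ
    rw [h2', tsum_eq_sum (s := s) (by simpa only [hψn] using hfs), hs, Finset.sum_map] at h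
    rw [← Real.rpow_natCast]
    push_cast
    rw [h, ← hsum]
    apply Finset.sum_congr rfl
    intro i hi
    rw [Finset.mem_range] at hi
    rw [hψn]
    simp only [hf, Nat.castEmbedding_apply]
    rw [if_pos (by omega)]
    simp
  have hLpos : (0 : ℝ) < L := by
    rcases Nat.eq_zero_or_pos L with h | h
    · subst h
      norm_num at hL
    · exact_mod_cast h
  have hψ0 : ψ ≠ 0 := by
    intro h
    rw [h] at hnorm
    simp at hnorm
    rcases hnorm with h | h
    · rw [h] at hLpos
      simp at hLpos
    · linarith
  refine ⟨ψ, hψ0, ?_⟩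
  have hres : H ψ - (e : ℂ) • ψ = lp.single 2 (-1 : ℤ) (u 0 : ℂ) - lp.single 2 (0 : ℤ) (u (-1) : ℂ)
      - lp.single 2 ((M : ℤ) - 1) (u M : ℂ) + lp.single 2 (M : ℤ) (u (M - 1) : ℂ) := by
    apply lp.ext
    funext n
    have e0 : (H ψ - (e : ℂ) • ψ) n = H ψ n - (e : ℂ) * ψ n := rfl
    have e1 : ∀ a b c d : lp (fun _ : ℤ => ℂ) 2, (a - b - c + d) n = a n - b n - c n + d n :=
      fun _ _ _ _ => rfl
    have c1 : (if 0 ≤ n + 1 ∧ n + 1 < M then (u (n + 1) : ℂ) else 0) =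
        (if 0 ≤ n ∧ n < M then (u (n + 1) : ℂ) else 0) + (if n = -1 then (u 0 : ℂ) else 0)
        - (if n = M - 1 then (u M : ℂ) else 0) := by
      by_cases hM0 : M = 0
      · subst hM0
        split_ifs <;> first | (exfalso; omega) | simp
      · by_cases h1 : n = -1
        · subst h1
          split_ifs <;> first | (exfalso; omega) | simp
        · by_cases h2 : n = M - 1
          · subst h2
            split_ifs <;> first | (exfalso; omega) | simp
          · split_ifs <;> first | (exfalso; omega) | simp
    have c2 : (if 0 ≤ n - 1 ∧ n - 1 < M then (u (n - 1) : ℂ) else 0) =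
        (if 0 ≤ n ∧ n < M then (u (n - 1) : ℂ) else 0) - (if n = 0 then (u (-1) : ℂ) else 0)
        + (if n = M then (u (M - 1) : ℂ) else 0) := by
      by_cases hM0 : M = 0
      · subst hM0
        split_ifs <;> first | (exfalso; omega) | simp
      · by_cases h1 : n = 0
        · subst h1
          split_ifs <;> first | (exfalso; omega) | simp
        · by_cases h2 : n = M
          · subst h2
            split_ifs <;> first | (exfalso; omega) | simp
          · split_ifs <;> first | (exfalso; omega) | simp
    rw [e0, e1, hH]
    simp only [lp.single_apply, Pi.single_apply, hψn, hf]
    rw [c1, c2]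
    have key : (if 0 ≤ n ∧ n < M then (u (n + 1) : ℂ) else 0) +
        (if 0 ≤ n ∧ n < M then (u (n - 1) : ℂ) else 0) +
        (V n : ℂ) * (if 0 ≤ n ∧ n < M then (u n : ℂ) else 0) =
        (e : ℂ) * (if 0 ≤ n ∧ n < M then (u n : ℂ) else 0) := by
      split_ifs with h
      · exact_mod_cast heq n h.1 h.2
      · simp
    linear_combination key
  have habs : ∀ n, ‖(u n : ℂ)‖ ≤ √S := by
    intro n
    rw [Complex.norm_real, Real.norm_eq_abs]
    exact Real.abs_le_sqrt (hle n)
  have hR : ‖H ψ - (e : ℂ) • ψ‖ ≤ 4 * √S := by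
    rw [hres]
    have hs : ∀ (i : ℤ) (n : ℤ), ‖lp.single (E := fun _ : ℤ => ℂ) 2 i (u n : ℂ)‖ ≤ √S := by
      intro i n
      rw [lp.norm_single (by norm_num)]
      exact habs n
    refine (norm_add_le _ _).trans ?_
    have a1 := norm_sub_le (lp.single (E := fun _ : ℤ => ℂ) 2 (-1 : ℤ) (u 0 : ℂ)
      - lp.single 2 (0 : ℤ) (u (-1) : ℂ)) (lp.single 2 ((M : ℤ) - 1) (u M : ℂ))
    have a2 := norm_sub_le (lp.single (E := fun _ : ℤ => ℂ) 2 (-1 : ℤ) (u 0 : ℂ))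
      (lp.single 2 (0 : ℤ) (u (-1) : ℂ))
    linarith [hs (-1) 0, hs 0 (-1), hs (M - 1) M, hs M (M - 1)]
  refine hR.trans ?_
  refine (pow_le_pow_iff_left₀ (by positivity) (by positivity) two_ne_zero).1 ?_
  rw [mul_pow, mul_pow, Real.sq_sqrt hS.le, hnorm]
  nlinarith

/-- amplitude at stage `k` -/
noncomputable def sfη (k : ℕ) : ℝ := 6 * (3 / 4) ^ k

theorem sfη_pos (k : ℕ) : 0 < sfη k := by unfold sfη; positivity

theorem sfη_le (k : ℕ) : sfη k ≤ 6 := by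
  unfold sfη
  have : ((3 : ℝ) / 4) ^ k ≤ 1 := pow_le_one₀ (by norm_num) (by norm_num)
  linarith

theorem sfη_succ (k : ℕ) : sfη (k + 1) = 3 / 4 * sfη k := by
  unfold sfη
  ring

theorem sfη_small (ε : ℝ) (hε : 0 < ε) : ∃ K, ∀ k ≥ K, sfη k < ε := by
  have h : Tendsto sfη atTop (nhds 0) := by
    have := (tendsto_pow_atTop_nhds_zero_of_lt_one (r := (3 / 4 : ℝ)) (by norm_num)
      (by norm_num)).const_mul 6
    rw [mul_zero] at this
    exact this
  exact eventually_atTop.1 (h.eventually_lt_const hε)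

theorem sf_exists_L (K : ℝ) (hK : 1 ≤ K) (k p : ℕ) : ∃ L : ℕ, 0 < L ∧ 384 ≤ sfη k ^ 2 * L ∧ k ≤ L ∧
    1 + L * (K ^ p + 1) < Real.exp (L * (1 / ((k : ℝ) + 1))) := by
  set c : ℝ := 1 / ((k : ℝ) + 1) with hc
  have hcpos : 0 < c := by positivity
  set B := K ^ p + 1 with hB
  have hBpos : 0 < B := by positivity
  have hη := sfη_pos k
  obtain ⟨L, hL⟩ := exists_nat_ge (1 + k + 384 / sfη k ^ 2 + 2 * B / c ^ 2)
  have h1 : 0 ≤ 384 / sfη k ^ 2 := by positivity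
  have h2 : 0 ≤ 2 * B / c ^ 2 := by positivity
  have hk : (0 : ℝ) ≤ k := by positivity
  have hL1 : (1 : ℝ) ≤ L := by linarith
  refine ⟨L, ?_, ?_, ?_, ?_⟩
  · exact_mod_cast lt_of_lt_of_le zero_lt_one hL1
  · have : 384 / sfη k ^ 2 ≤ L := by linarith
    rw [div_le_iff₀ (by positivity)] at this
    linarith
  · have : (k : ℝ) ≤ L := by linarith
    exact_mod_cast this
  · have h3 : 2 * B / c ^ 2 ≤ L := by linarith
    rw [div_le_iff₀ (by positivity)] at h3
    have h4 := Real.quadratic_le_exp_of_nonneg (x := L * c) (by positivity)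
    have h5 : 0 < L * c := by positivity
    have h6 : L * B ≤ (L * c) ^ 2 / 2 := by
      nlinarith
    linarith

theorem sf_seq (K : ℝ) (hK : 1 ≤ K) : ∃ P L : ℕ → ℕ, P 0 = 1 ∧ (∀ k, P (k + 1) = 3 * (P k * L k)) ∧
    ∀ k, 0 < L k ∧ 384 ≤ sfη k ^ 2 * L k ∧ k ≤ L k ∧
    1 + L k * (K ^ (P k) + 1) < Real.exp (L k * (1 / ((k : ℝ) + 1))) := by
  choose Lf hLf using sf_exists_L K hK
  let P : ℕ → ℕ := fun k => Nat.rec 1 (fun k p => 3 * (p * Lf k p)) k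
  exact ⟨P, fun k => Lf k (P k), rfl, fun k => rfl, fun k => hLf k (P k)⟩

/-- perturbation added at stage `k` -/
noncomputable def sfd (P L : ℕ → ℕ) (k : ℕ) (n : ℤ) : ℝ :=
  sfη k / 2 * sfs ((n / ((P k * L k : ℕ) : ℤ)) % 3)

/-- periodic approximants -/
noncomputable def sfVk (P L : ℕ → ℕ) (k : ℕ) (n : ℤ) : ℝ := ∑ i ∈ Finset.range k, sfd P L i n

/-- the limit-periodic potential -/
noncomputable def sfV (P L : ℕ → ℕ) (n : ℤ) : ℝ := ∑' i, sfd P L i n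

theorem sfd_abs (P L : ℕ → ℕ) (k : ℕ) (n : ℤ) : ‖sfd P L k n‖ ≤ 3 * (3 / 4) ^ k := by
  have hs : ∀ r, |sfs r| ≤ 1 := by
    intro r
    unfold sfs
    split_ifs <;> simp
  unfold sfd
  rw [norm_mul, Real.norm_eq_abs, Real.norm_eq_abs, abs_of_pos (by linarith [sfη_pos k])]
  have := mul_le_mul_of_nonneg_left (hs ((n / ((P k * L k : ℕ) : ℤ)) % 3))
    (by linarith [sfη_pos k] : 0 ≤ sfη k / 2)
  refine this.trans ?_
  unfold sfη
  linarith

theorem sf_hasSum (k : ℕ) : HasSum (fun i : ℕ => (3 : ℝ) * (3 / 4) ^ (i + k)) (2 * sfη k) := by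
  have := (hasSum_geometric_of_lt_one (r := (3 / 4 : ℝ)) (by norm_num)
      (by norm_num)).mul_left (3 * (3 / 4) ^ k)
  have h1 : (fun i : ℕ => (3 : ℝ) * (3 / 4) ^ (i + k)) =
      fun i => 3 * (3 / 4) ^ k * (3 / 4) ^ i := by
    funext i
    ring
  have h2 : 2 * sfη k = 3 * (3 / 4) ^ k * (1 - 3 / 4)⁻¹ := by
    unfold sfη
    ring
  rw [h1, h2]
  exact this

theorem sf_summable (P L : ℕ → ℕ) (n : ℤ) : Summable (fun i => sfd P L i n) := by
  have h := (sf_hasSum 0).summable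
  simp only [add_zero] at h
  exact Summable.of_norm_bounded h (fun i => sfd_abs P L i n)

theorem sfV_sub (P L : ℕ → ℕ) (k : ℕ) (n : ℤ) : |sfV P L n - sfVk P L k n| ≤ 2 * sfη k := by
  have h := (sf_summable P L n).sum_add_tsum_nat_add k
  have h2 : sfV P L n - sfVk P L k n = ∑' i, sfd P L (i + k) n := by
    unfold sfV sfVk
    linarith
  rw [h2, ← Real.norm_eq_abs]
  exact tsum_of_norm_bounded (sf_hasSum k) (fun i => sfd_abs P L (i + k) n)

theorem sfV_abs (P L : ℕ → ℕ) (n : ℤ) : |sfV P L n| ≤ 12 := by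
  have := sfV_sub P L 0 n
  simp [sfVk] at this
  linarith [sfη_le 0]

theorem sfVk_abs (P L : ℕ → ℕ) (k : ℕ) (n : ℤ) : |sfVk P L k n| ≤ 24 := by
  have h1 := abs_le.1 (sfV_sub P L k n)
  have h2 := abs_le.1 (sfV_abs P L n)
  have h3 := sfη_le k
  exact abs_le.2 ⟨by linarith, by linarith⟩


theorem sf_P_pos (P L : ℕ → ℕ) (hP0 : P 0 = 1) (hP : ∀ k, P (k + 1) = 3 * (P k * L k))
    (hL : ∀ k, 0 < L k) (k : ℕ) : 0 < P k := by
  induction k with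
  | zero => omega
  | succ k ih =>
    rw [hP]
    have := hL k
    positivity

theorem sf_M_mono (P L : ℕ → ℕ) (hP : ∀ k, P (k + 1) = 3 * (P k * L k))
    (hL : ∀ k, 0 < L k) : Monotone (fun k => P k * L k) := by
  apply monotone_nat_of_le_succ
  intro k
  rw [hP]
  have := hL (k + 1)
  nlinarith [Nat.zero_le (P k * L k)]

theorem sfV_eq (P L : ℕ → ℕ) (hP : ∀ k, P (k + 1) = 3 * (P k * L k))
    (hL : ∀ k, 0 < L k) (k : ℕ) (n : ℤ) (h0 : 0 ≤ n) (h1 : n < (P k * L k : ℕ)) :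
    sfV P L n = sfVk P L k n := by
  unfold sfV sfVk
  apply tsum_eq_sum
  intro i hi
  rw [Finset.mem_range, not_lt] at hi
  have hm : P k * L k ≤ P i * L i := sf_M_mono P L hP hL hi
  have : n / ((P i * L i : ℕ) : ℤ) = 0 := Int.ediv_eq_zero_of_lt h0 (by
    have : ((P k * L k : ℕ) : ℤ) ≤ ((P i * L i : ℕ) : ℤ) := by exact_mod_cast hm
    linarith)
  unfold sfd
  rw [this]
  simp [sfs]

theorem sfVk_per (P L : ℕ → ℕ) (hP0 : P 0 = 1) (hP : ∀ k, P (k + 1) = 3 * (P k * L k))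
    (hL : ∀ k, 0 < L k) (k : ℕ) : IsPeriodic (sfVk P L k) (P k) := by
  induction k with
  | zero => intro n; simp [sfVk]
  | succ k ih =>
    intro n
    have hM : 0 < P k * L k := Nat.mul_pos (sf_P_pos P L hP0 hP hL k) (hL k)
    have hMz : (((P k * L k : ℕ) : ℤ)) ≠ 0 := by exact_mod_cast hM.ne'
    unfold sfVk at ih ⊢
    rw [Finset.sum_range_succ, Finset.sum_range_succ, hP]
    congr 1
    · have := sf_per_mul ih n (3 * L k)
      rw [← this]
      apply Finset.sum_congr rfl
      intro i _
      congr 1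
      push_cast
      ring
    · unfold sfd
      congr 2
      rw [Nat.cast_mul 3, Int.add_mul_ediv_right _ _ hMz]
      omega

theorem sf_dense (P L : ℕ → ℕ) (hP0 : P 0 = 1) (hP : ∀ k, P (k + 1) = 3 * (P k * L k))
    (hL : ∀ k, 0 < L k) (hLη : ∀ k, 384 ≤ sfη k ^ 2 * L k) (k : ℕ) (E : ℝ) (hE : |E| ≤ 4) :
    ∃ (e : ℝ) (u : ℤ → ℝ), |e - E| ≤ sfη k ∧ IsPeriodic u (P k) ∧ (∃ n, u n ≠ 0) ∧
      ∀ n, u (n + 1) + u (n - 1) + sfVk P L k n * u n = e * u n := by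
  induction k with
  | zero =>
    refine ⟨2, fun _ => 1, ?_, fun _ => rfl, ⟨0, one_ne_zero⟩, ?_⟩
    · have := abs_le.1 hE
      unfold sfη
      rw [abs_le]
      constructor <;> norm_num <;> linarith
    · intro n
      simp [sfVk]
      norm_num
  | succ k ih =>
    obtain ⟨e, u, he, hu, hne, heq⟩ := ih
    have hη := sfη_pos k
    have hj : ∃ j : ℕ, j < 3 ∧ |e + sfη k / 2 * sfs j - E| ≤ sfη k / 2 := by
      rw [abs_le] at he
      by_cases hx : e ≤ E
      · refine ⟨1, by norm_num, ?_⟩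
        simp [sfs]
        rw [abs_le]
        constructor <;> linarith
      · refine ⟨2, by norm_num, ?_⟩
        simp [sfs]
        rw [abs_le]
        constructor <;> linarith
    obtain ⟨j, hj3, hjE⟩ := hj
    obtain ⟨e', u', he', hu', hne', heq'⟩ := sf_step (P k) (L k) (sf_P_pos P L hP0 hP hL k) (hL k)
      (sfVk P L k) u (sfVk_per P L hP0 hP hL k) hu hne e heq (sfη k / 2) j hj3 (sfη k / 4)
      (by linarith) (by nlinarith [hLη k])
    refine ⟨e', u', ?_, ?_, hne', ?_⟩
    · rw [sfη_succ]
      rw [abs_le] at *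
      constructor <;> linarith
    · rw [hP]
      exact hu'
    · intro n
      rw [← heq' n]
      simp only [sfVk, Finset.sum_range_succ, sfd]

/-- there is a bounded limit-periodic potential `V` and a Schrödinger
operator `H` with potential `V` such that `σ(H)` contains `[-4,4]` and the set of
`E ∈ [-4,4]` where `liminf (1/N) log‖A_N(E,V)‖ = 0` contains a dense Gδ subset
of `[-4,4]`. -/
theorem statement0 :
    ∃ (V : ℤ → ℝ) (H : lp (fun _ : ℤ => ℂ) 2 →L[ℂ] lp (fun _ : ℤ => ℂ) 2),
      (∃ C : ℝ, ∀ n : ℤ, |V n| ≤ C) ∧ IsLimitPeriodic V ∧ IsSchrodingerOp V H ∧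
      (∀ E ∈ Set.Icc (-4 : ℝ) 4, (E : ℂ) ∈ spectrum ℂ H) ∧
      (∃ G : Set (Set.Icc (-4 : ℝ) 4), IsGδ G ∧ Dense G ∧
        ∀ x ∈ G, Filter.liminf (fun N : ℕ => logNormRate V (x : ℝ) N) Filter.atTop = 0) := by
  obtain ⟨K, hK, hgrow⟩ := sf_growth
  obtain ⟨P, L, hP0, hP, hPL⟩ := sf_seq K hK
  have hL : ∀ k, 0 < L k := fun k => (hPL k).1
  have hLη : ∀ k, 384 ≤ sfη k ^ 2 * L k := fun k => (hPL k).2.1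
  have hkL : ∀ k, k ≤ L k := fun k => (hPL k).2.2.1
  have hPpos := sf_P_pos P L hP0 hP hL
  obtain ⟨H, hH⟩ := sf_exists_H (sfV P L) 12 (sfV_abs P L)
  -- the key estimate
  have hsmall : ∀ (k : ℕ) (E : ℝ), |E| ≤ 4 → ∃ e, |e - E| ≤ sfη k ∧
      opNorm (transferMatrix (sfV P L) e (P k * L k)) <
        Real.exp ((P k * L k : ℕ) * (1 / ((k : ℝ) + 1))) := by
    intro k E hE
    obtain ⟨e, u, he, hu, hne, heq⟩ := sf_dense P L hP0 hP hL hLη k E hE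
    refine ⟨e, he, ?_⟩
    rw [sf_tm_congr (sfV P L) (sfVk P L k) e _ (fun n hn => sfV_eq P L hP hL k n (by positivity)
      (by exact_mod_cast hn))]
    have h1 := hgrow (sfVk P L k) u e (P k) (L k) (sfVk_per P L hP0 hP hL k) hu hne heq (by
      intro n
      have a1 := abs_le.1 (sfVk_abs P L k n)
      have a2 := abs_le.1 he
      have a3 := abs_le.1 hE
      have a4 := sfη_le k
      exact abs_le.2 ⟨by linarith, by linarith⟩)
    refine h1.trans_lt ((hPL k).2.2.2.trans_le ?_)
    apply Real.exp_le_exp.2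
    apply mul_le_mul_of_nonneg_right _ (by positivity)
    exact_mod_cast Nat.le_mul_of_pos_left (L k) (hPpos k)
  refine ⟨sfV P L, H, ⟨12, sfV_abs P L⟩, ?_, hH, ?_, ?_⟩
  · refine ⟨sfVk P L, P, fun k => ⟨hPpos k, sfVk_per P L hP0 hP hL k⟩, ?_⟩
    intro ε hε
    obtain ⟨k0, hk0⟩ := sfη_small (ε / 2) (by linarith)
    refine ⟨k0, fun k hk n => ?_⟩
    have := sfV_sub P L k n
    have := hk0 k hk
    linarith
  · intro E hE
    have hE4 : |E| ≤ 4 := abs_le.2 hE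
    apply sf_spec
    intro ε hε
    obtain ⟨k0, hk0⟩ := sfη_small (ε / 2) (by linarith)
    obtain ⟨e, u, he, hu, hne, heq⟩ := sf_dense P L hP0 hP hL hLη k0 E hE4
    have hle := sf_le_S (P k0) (hPpos k0) u hu
    have hSpos : 0 < ∑ i ∈ Finset.range (P k0), u i ^ 2 := by
      obtain ⟨n, hn⟩ := hne
      exact lt_of_lt_of_le (by positivity) (hle n)
    have hsum := sf_sum_per (P k0) (L k0) u hu 0
    simp only [zero_mul, zero_add] at hsum
    obtain ⟨ψ, hψ, hψle⟩ := sf_weyl (sfV P L) H hH u e _ (sfη k0) (P k0 * L k0) (L k0) hSpos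
      (sfη_pos k0).le (by linarith [hLη k0]) (by
        intro n h0 h1
        rw [sfV_eq P L hP hL k0 n h0 h1]
        exact heq n) hle hsum
    refine ⟨ψ, hψ, ?_⟩
    have hsplit : H ψ - (E : ℂ) • ψ = (H ψ - (e : ℂ) • ψ) + ((e - E : ℝ) : ℂ) • ψ := by
      push_cast
      rw [sub_smul]
      abel
    rw [hsplit]
    refine (norm_add_le _ _).trans ?_
    rw [norm_smul, Complex.norm_real, Real.norm_eq_abs]
    have h1 := hk0 k0 le_rfl
    have h2 : |e - E| * ‖ψ‖ ≤ sfη k0 * ‖ψ‖ := mul_le_mul_of_nonneg_right he (norm_nonneg _)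
    nlinarith [norm_nonneg ψ]
  · set O : ℕ → Set (Set.Icc (-4 : ℝ) 4) := fun m =>
      {x | opNorm (transferMatrix (sfV P L) (x : ℝ) (P m * L m)) <
        Real.exp ((P m * L m : ℕ) * (1 / ((m : ℝ) + 1)))} with hO
    have hOopen : ∀ m, IsOpen (O m) := by
      intro m
      apply isOpen_lt
      · exact sf_opNorm_cont.comp ((sf_tm_cont (sfV P L) (P m * L m)).comp continuous_subtype_val)
      · exact continuous_const
    set U : ℕ → Set (Set.Icc (-4 : ℝ) 4) := fun k => ⋃ m, ⋃ (_ : k ≤ m), O m with hU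
    have hUopen : ∀ k, IsOpen (U k) := fun k =>
      isOpen_iUnion (fun m => isOpen_iUnion (fun _ => hOopen m))
    have hUdense : ∀ k, Dense (U k) := by
      intro k
      rw [Metric.dense_iff]
      rintro ⟨x, hx⟩ r hr
      -- move the center to the interior
      have hy : ∃ y δ : ℝ, 0 < δ ∧ |y - x| + δ < r ∧ |y| + δ ≤ 4 := by
        have hx' := abs_le.2 hx
        set t := min (r / 12) (1 / 2) with ht
        have ht0 : 0 < t := by positivity
        have ht1 : t ≤ r / 12 := min_le_left _ _
        have ht2 : t ≤ 1 / 2 := min_le_right _ _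
        refine ⟨x * (1 - t), 4 * t, by positivity, ?_, ?_⟩
        · have : x * (1 - t) - x = -(x * t) := by ring
          rw [this, abs_neg, abs_mul, abs_of_pos ht0]
          nlinarith
        · rw [abs_mul, abs_of_pos (by linarith : 0 < 1 - t)]
          nlinarith
      obtain ⟨y, δ, hδ, hyx, hy4⟩ := hy
      obtain ⟨k0, hk0⟩ := sfη_small δ hδ
      obtain ⟨e, he, hlt⟩ := hsmall (max k k0) y (by linarith)
      have hη := hk0 (max k k0) (le_max_right _ _)
      have he4 : e ∈ Set.Icc (-4 : ℝ) 4 := by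
        apply abs_le.1
        have := abs_sub_abs_le_abs_sub e y
        linarith
      refine ⟨⟨e, he4⟩, ?_, ?_⟩
      · rw [Metric.mem_ball, Subtype.dist_eq, Real.dist_eq]
        have := abs_sub_le e y x
        simp only
        linarith
      · simp only [hU, Set.mem_iUnion]
        exact ⟨max k k0, le_max_left _ _, hlt⟩
    refine ⟨⋂ k, U k, IsGδ.iInter_of_isOpen hUopen, dense_iInter_of_isOpen hUopen hUdense, ?_⟩
    intro x hx
    have hnonneg : ∀ N, 0 ≤ logNormRate (sfV P L) (x : ℝ) N := by
      intro N
      unfold logNormRate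
      exact mul_nonneg (by positivity) (Real.log_nonneg (sf_one_le_opNorm _ (sf_tm_det _ _ _)))
    have hfreq : ∀ ε > (0 : ℝ), ∃ᶠ N in atTop, logNormRate (sfV P L) (x : ℝ) N ≤ ε := by
      intro ε hε
      rw [frequently_atTop]
      intro N0
      obtain ⟨m0, hm0⟩ := exists_nat_one_div_lt hε
      have hxU := Set.mem_iInter.1 hx (max N0 m0)
      simp only [hU, Set.mem_iUnion] at hxU
      obtain ⟨m, hm, hxm⟩ := hxU
      have hMm : m ≤ P m * L m :=
        (hkL m).trans (Nat.le_mul_of_pos_left (L m) (hPpos m))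
      refine ⟨P m * L m, ((le_max_left _ _).trans hm).trans hMm, ?_⟩
      have hMpos : (0 : ℝ) < (P m * L m : ℕ) := by
        exact_mod_cast Nat.mul_pos (hPpos m) (hL m)
      have h1 : 1 ≤ opNorm (transferMatrix (sfV P L) (x : ℝ) (P m * L m)) :=
        sf_one_le_opNorm _ (sf_tm_det _ _ _)
      have h2 : Real.log (opNorm (transferMatrix (sfV P L) (x : ℝ) (P m * L m))) <
          (P m * L m : ℕ) * (1 / ((m : ℝ) + 1)) :=
        (Real.log_lt_iff_lt_exp (by linarith)).2 hxm
      have h3 : 1 / ((m : ℝ) + 1) ≤ 1 / ((m0 : ℝ) + 1) := by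
        apply one_div_le_one_div_of_le (by positivity)
        have : m0 ≤ m := (le_max_right _ _).trans hm
        have : (m0 : ℝ) ≤ m := by exact_mod_cast this
        linarith
      unfold logNormRate
      rw [one_div, inv_mul_le_iff₀ hMpos]
      refine h2.le.trans ?_
      apply mul_le_mul_of_nonneg_left _ hMpos.le
      linarith
    apply le_antisymm
    · apply le_of_forall_pos_le_add
      intro ε hε
      rw [zero_add]
      exact liminf_le_of_frequently_le (hfreq ε hε)
        (isBoundedUnder_of ⟨0, fun N => hnonneg N⟩)
    · exact le_liminf_of_le (IsCoboundedUnder.of_frequently_le (hfreq 1 one_pos))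
        (Eventually.of_forall hnonneg)
end

section
/- Let à be a 2×2 real matrix with det à = 1, let v and v⊥ be orthonormal vectors in ℝ² (with the standard inner product), and let a ∈ ℝ. Then there exists h ∈ {1,2} such that ⟨v, Ã^h v⟩ + a·⟨v⊥, Ã^h v⟩ ≠ 0. -/
open Filter Matrix

/-- for an `SL(2,ℝ)` matrix `Ã`, orthonormal `v, v⊥` and `a ∈ ℝ`,
some `h ∈ {1,2}` has `⟨v, Ã^h v⟩ + a⟨v⊥, Ã^h v⟩ ≠ 0`. -/
theorem statement9 (A : Matrix (Fin 2) (Fin 2) ℝ) (hdet : A.det = 1)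
    (v vperp : Fin 2 → ℝ)
    (hv : v ⬝ᵥ v = 1) (hvperp : vperp ⬝ᵥ vperp = 1) (hortho : v ⬝ᵥ vperp = 0)
    (a : ℝ) :
    ∃ h ∈ ({1, 2} : Set ℕ),
      v ⬝ᵥ ((A ^ h).mulVec v) + a * (vperp ⬝ᵥ ((A ^ h).mulVec v)) ≠ 0 := by
  by_contra! hc
  have h1 := hc 1 (by simp)
  have h2 := hc 2 (by simp)
  simp only [pow_two, pow_one, Matrix.det_fin_two, dotProduct, Matrix.mulVec, Matrix.mul_apply,
    Fin.sum_univ_two] at h1 h2 hv hortho hdet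
  have : (1 : ℝ) = 0 := by
    linear_combination -h2 + (A 0 0 + A 1 1) * h1
      - a * (A 0 0 * A 1 1 - A 0 1 * A 1 0) * hortho
      - (A 0 0 * A 1 1 - A 0 1 * A 1 0) * hv - hdet
  exact one_ne_zero this
end

section
/- Let V : ℤ → ℝ be p-periodic (p ≥ 1) with Schrödinger operator H, and let E₀ = inf {x ∈ ℝ : (x : ℂ) ∈ σ(H)}; assume E₀ > 0. Let m₀ ≥ 1 be an integer with (E₀/5)·√m₀ > 4 and set p̃ = m₀·p. For integers m, h ≥ 1 let V̂_{m,h} be the (m+h)·p̃-periodic potential defined by V̂_{m,h}(n) = V(n) if n mod (m+h)·p̃ ∈ [0, m·p̃ − 1], and V̂_{m,h}(n) = V(n) − 2E₀/5 if n mod (m+h)·p̃ ∈ [m·p̃, (m+h)·p̃ − 1], with Schrödinger operator Ĥ_{m,h}. Then 3E₀/5 ≤ inf {x ∈ ℝ : (x : ℂ) ∈ σ(Ĥ_{m,h})} ≤ 4E₀/5. -/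
open Filter Matrix

/-- Quadratic form on finitely supported functions. -/
noncomputable def QF (V : ℤ → ℝ) (s : Finset ℤ) (f : ℤ → ℂ) : ℝ :=
  ∑ n ∈ s, ((star (f n) * (f (n + 1) + f (n - 1))).re + V n * ‖f n‖ ^ 2)

/-- Lower bound on the quadratic form. -/
def FormGE (V : ℤ → ℝ) (c : ℝ) : Prop :=
  ∀ (s : Finset ℤ) (f : ℤ → ℂ), (∀ n, n ∉ s → f n = 0) → c * ∑ n ∈ s, ‖f n‖ ^ 2 ≤ QF V s f

lemma schr_single (V : ℤ → ℝ) (H : lp (fun _ : ℤ => ℂ) 2 →L[ℂ] lp (fun _ : ℤ => ℂ) 2)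
    (hH : IsSchrodingerOp V H) (n : ℤ) :
    H (lp.single 2 n (1 : ℂ)) = lp.single 2 (n + 1) (1 : ℂ) + lp.single 2 (n - 1) (1 : ℂ)
      + (V n : ℂ) • lp.single 2 n (1 : ℂ) := by
  ext k
  rw [hH]
  simp only [lp.coeFn_add, lp.coeFn_smul, Pi.add_apply, Pi.smul_apply, lp.single_apply,
    Pi.single_apply, smul_eq_mul]
  have h1 : (k + 1 = n) ↔ (k = n - 1) := by omega
  have h2 : (k - 1 = n) ↔ (k = n + 1) := by omega
  rw [if_congr h1 rfl rfl, if_congr h2 rfl rfl]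
  by_cases h : k = n
  · subst h; ring
  · simp [h]; ring

lemma schr_selfAdjoint (V : ℤ → ℝ) (H : lp (fun _ : ℤ => ℂ) 2 →L[ℂ] lp (fun _ : ℤ => ℂ) 2)
    (hH : IsSchrodingerOp V H) : IsSelfAdjoint H := by
  rw [ContinuousLinearMap.isSelfAdjoint_iff']
  ext ψ n
  have h : inner ℂ (lp.single 2 n (1 : ℂ)) (ContinuousLinearMap.adjoint H ψ)
      = (ContinuousLinearMap.adjoint H ψ) n := by
    rw [lp.inner_single_left]; simp
  rw [← h, ContinuousLinearMap.adjoint_inner_right, schr_single V H hH, hH]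
  rw [inner_add_left, inner_add_left, inner_smul_left]
  simp only [lp.inner_single_left]
  simp

lemma schr_form (V : ℤ → ℝ) (H : lp (fun _ : ℤ => ℂ) 2 →L[ℂ] lp (fun _ : ℤ => ℂ) 2)
    (hH : IsSchrodingerOp V H) (s : Finset ℤ) (f : ℤ → ℂ) (hf : ∀ n, n ∉ s → f n = 0)
    (ψ : lp (fun _ : ℤ => ℂ) 2) (hψ : ψ = ∑ i ∈ s, lp.single 2 i (f i)) :
    (inner ℂ (H ψ) ψ).re = QF V s f ∧ ‖ψ‖ ^ 2 = ∑ n ∈ s, ‖f n‖ ^ 2 := by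
  have hval : ∀ n, ψ n = f n := by
    intro n
    rw [hψ, lp.coeFn_sum, Finset.sum_apply]
    simp only [lp.single_apply, Pi.single_apply]
    rw [Finset.sum_ite_eq]
    split_ifs with h
    · rfl
    · exact (hf n h).symm
  have hin : ∀ φ : lp (fun _ : ℤ => ℂ) 2, inner ℂ φ ψ = ∑ i ∈ s, inner ℂ (φ i) (f i) := by
    intro φ
    rw [hψ, inner_sum]
    simp only [lp.inner_single_right]
  constructor
  · rw [hin, Complex.re_sum, QF]
    refine Finset.sum_congr rfl fun n _ => ?_
    rw [hH, hval, hval, hval]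
    simp [Complex.sq_norm, Complex.normSq_apply]
    ring
  · have := inner_self_eq_norm_sq (𝕜 := ℂ) ψ
    rw [← this, hin, map_sum]
    refine Finset.sum_congr rfl fun n _ => ?_
    rw [hval]
    exact inner_self_eq_norm_sq (𝕜 := ℂ) (f n)

lemma gen_spec_iff {E : Type*} [NormedAddCommGroup E] [InnerProductSpace ℂ E] [CompleteSpace E]
    (H : E →L[ℂ] E) (hsa : IsSelfAdjoint H) (c : ℝ) :
    (∀ x : ℝ, (x : ℂ) ∈ spectrum ℂ H → c ≤ x) ↔
      ∀ ψ : E, c * ‖ψ‖ ^ 2 ≤ (inner ℂ (H ψ) ψ).re := by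
  have h0 : (∀ x : ℝ, (x : ℂ) ∈ spectrum ℂ H → c ≤ x) ↔ ∀ x ∈ spectrum ℝ H, c ≤ x :=
    forall_congr' fun x => imp_congr
      (spectrum.algebraMap_mem_iff ℂ (R := ℝ) (a := H) (r := x)) Iff.rfl
  rw [h0, ← algebraMap_le_iff_le_spectrum (a := H) hsa, ContinuousLinearMap.le_def,
    ContinuousLinearMap.isPositive_def']
  have hsa2 : IsSelfAdjoint (H - algebraMap ℝ _ c) :=
    hsa.sub (IsSelfAdjoint.algebraMap _ (IsSelfAdjoint.all c))
  have hq : ∀ ψ, (H - algebraMap ℝ _ c).reApplyInnerSelf ψ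
      = (inner ℂ (H ψ) ψ).re - c * ‖ψ‖ ^ 2 := by
    intro ψ
    rw [ContinuousLinearMap.reApplyInnerSelf_apply, _root_.sub_apply, inner_sub_left,
      Algebra.algebraMap_eq_smul_one, _root_.smul_apply]
    have : (c • (1 : E →L[ℂ] E) ψ) = (c : ℂ) • ψ := by
      simp
    rw [this, inner_smul_left, map_sub]
    have h2 := inner_self_eq_norm_sq (𝕜 := ℂ) ψ
    rw [← h2]
    simp
  simp only [hq, sub_nonneg]
  exact ⟨fun h => h.2, fun h => ⟨hsa2, h⟩⟩

lemma gen_spec_nonempty {E : Type*} [NormedAddCommGroup E] [InnerProductSpace ℂ E]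
    [CompleteSpace E] [Nontrivial E] (H : E →L[ℂ] E) (hsa : IsSelfAdjoint H) :
    {x : ℝ | (x : ℂ) ∈ spectrum ℂ H}.Nonempty := by
  obtain ⟨x, hx⟩ := ContinuousFunctionalCalculus.spectrum_nonempty (R := ℝ) H hsa
  exact ⟨x, (spectrum.algebraMap_mem_iff ℂ (R := ℝ) (a := H) (r := x)).2 hx⟩

lemma gen_spec_bdd {E : Type*} [NormedAddCommGroup E] [InnerProductSpace ℂ E]
    [CompleteSpace E] (H : E →L[ℂ] E) :
    BddBelow {x : ℝ | (x : ℂ) ∈ spectrum ℂ H} := by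
  obtain ⟨b, hb⟩ := (spectrum.isCompact (𝕜 := ℝ) H).bddBelow
  exact ⟨b, fun x hx => hb ((spectrum.algebraMap_mem_iff ℂ (R := ℝ) (a := H) (r := x)).1 hx)⟩

lemma le_iff_formGE (V : ℤ → ℝ) (H : lp (fun _ : ℤ => ℂ) 2 →L[ℂ] lp (fun _ : ℤ => ℂ) 2)
    (hH : IsSchrodingerOp V H) (c : ℝ) :
    (∀ x : ℝ, (x : ℂ) ∈ spectrum ℂ H → c ≤ x) ↔ FormGE V c := by
  have hsa := schr_selfAdjoint V H hH
  rw [gen_spec_iff H hsa]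
  constructor
  · intro h s f hf
    obtain ⟨h1, h2⟩ := schr_form V H hH s f hf _ rfl
    have := h (∑ i ∈ s, lp.single 2 i (f i))
    rwa [h1, h2] at this
  · intro h ψ
    have hsum := lp.hasSum_single (E := fun _ : ℤ => ℂ) (p := 2) (by simp) ψ
    have hcont : Continuous fun ψ : lp (fun _ : ℤ => ℂ) 2 =>
        (inner ℂ (H ψ) ψ).re - c * ‖ψ‖ ^ 2 := by
      fun_prop
    have hlim := (hcont.tendsto ψ).comp hsum
    rw [← sub_nonneg]
    refine ge_of_tendsto' hlim fun s => ?_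
    simp only [Function.comp]
    have hrw : (∑ i ∈ s, lp.single 2 i (ψ i) : lp (fun _ : ℤ => ℂ) 2)
        = ∑ i ∈ s, lp.single 2 i ((fun n => if n ∈ s then ψ n else 0) i) := by
      refine Finset.sum_congr rfl fun n hn => ?_
      simp [hn]
    obtain ⟨h1, h2⟩ := schr_form V H hH s (fun n => if n ∈ s then ψ n else 0)
      (fun n hn => by simp [hn]) _ hrw
    rw [h1, h2]
    have := h s (fun n => if n ∈ s then ψ n else 0) (fun n hn => by simp [hn])
    linarith

lemma formGE_le_specInf (V : ℤ → ℝ) (H : lp (fun _ : ℤ => ℂ) 2 →L[ℂ] lp (fun _ : ℤ => ℂ) 2)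
    (hH : IsSchrodingerOp V H) (c : ℝ) (h : FormGE V c) : c ≤ specInf H := by
  have : Nontrivial (lp (fun _ : ℤ => ℂ) 2) := by
    refine ⟨⟨lp.single 2 0 1, 0, fun h => ?_⟩⟩
    have := congrArg (fun g : lp (fun _ : ℤ => ℂ) 2 => g 0) h
    simp at this
  exact le_csInf (gen_spec_nonempty H (schr_selfAdjoint V H hH))
    ((le_iff_formGE V H hH c).2 h)

lemma formGE_of_le_specInf (V : ℤ → ℝ) (H : lp (fun _ : ℤ => ℂ) 2 →L[ℂ] lp (fun _ : ℤ => ℂ) 2)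
    (hH : IsSchrodingerOp V H) (c : ℝ) (h : c ≤ specInf H) : FormGE V c := by
  refine (le_iff_formGE V H hH c).1 fun x hx => h.trans (csInf_le (gen_spec_bdd H) hx)

lemma shift_sum_le (s : Finset ℤ) (f : ℤ → ℂ) (hf : ∀ n, n ∉ s → f n = 0) (t : ℤ) :
    ∑ n ∈ s, ‖f (n + t)‖ ^ 2 ≤ ∑ n ∈ s, ‖f n‖ ^ 2 := by
  have h1 : ∑ n ∈ s, ‖f (n + t)‖ ^ 2
      = ∑ n ∈ s.map (Equiv.addRight t).toEmbedding, ‖f n‖ ^ 2 := by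
    rw [Finset.sum_map]; rfl
  rw [h1, ← Finset.sum_filter_of_ne (p := fun n => n ∈ s)]
  · refine Finset.sum_le_sum_of_subset_of_nonneg ?_ fun _ _ _ => by positivity
    intro x hx
    exact (Finset.mem_filter.1 hx).2
  · intro x _ hx
    by_contra hxs
    exact hx (by simp [hf x hxs])

lemma formGE_lower (V W : ℤ → ℝ) (c d : ℝ) (h : FormGE V c) (hW : ∀ n, V n - d ≤ W n) :
    FormGE W (c - d) := by
  intro s f hf
  have h1 := h s f hf
  have h2 : QF V s f - d * ∑ n ∈ s, ‖f n‖ ^ 2 ≤ QF W s f := by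
    unfold QF
    rw [Finset.mul_sum, ← Finset.sum_sub_distrib]
    refine Finset.sum_le_sum fun n _ => ?_
    have := mul_le_mul_of_nonneg_right (hW n) (sq_nonneg ‖f n‖)
    linarith
  linarith

lemma form_window (V W : ℤ → ℝ) (c d : ℝ) (h : FormGE W c) (a b t : ℤ)
    (hV : ∀ n, V (n + t) = V n) (hW : ∀ n, a ≤ n → n < b → W n = V n - d)
    (s : Finset ℤ) (f : ℤ → ℂ) (hf : ∀ n, n ∉ s → f n = 0)
    (hsupp : ∀ n, f n ≠ 0 → a ≤ n + t ∧ n + t < b) :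
    (c + d) * ∑ n ∈ s, ‖f n‖ ^ 2 ≤ QF V s f := by
  have h1 := h (s.map (Equiv.addRight t).toEmbedding) (fun n => f (n - t)) (by
    intro n hn
    apply hf
    intro hs
    apply hn
    rw [Finset.mem_map]
    exact ⟨n - t, hs, by simp⟩)
  unfold QF at h1 ⊢
  rw [Finset.sum_map, Finset.sum_map] at h1
  simp only [Equiv.coe_toEmbedding, Equiv.coe_addRight, add_sub_cancel_right] at h1
  have e : ∀ n ∈ s, ((star (f n) * (f (n + t + 1 - t) + f (n + t - 1 - t))).re
      + W (n + t) * ‖f n‖ ^ 2)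
      = ((star (f n) * (f (n + 1) + f (n - 1))).re + V n * ‖f n‖ ^ 2) - d * ‖f n‖ ^ 2 := by
    intro n _
    rw [show n + t + 1 - t = n + 1 by ring, show n + t - 1 - t = n - 1 by ring]
    by_cases h0 : f n = 0
    · simp [h0]
    · obtain ⟨ha, hb⟩ := hsupp n h0
      rw [hW _ ha hb, hV]; ring
  rw [Finset.sum_congr rfl e, Finset.sum_sub_distrib, ← Finset.mul_sum] at h1
  linarith

lemma hop_bound (x y : ℂ) (r : ℝ) (h0 : 0 ≤ r) (h1 : r ≤ 1) :
    -(‖x‖ ^ 2 / 2 + ‖y‖ ^ 2 / 2) ≤ r * (star x * y).re := by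
  have h2 : |(star x * y).re| ≤ ‖x‖ * ‖y‖ := by
    have := Complex.abs_re_le_norm (star x * y)
    rwa [norm_mul, norm_star] at this
  have h3 : |r * (star x * y).re| ≤ ‖x‖ * ‖y‖ := by
    rw [abs_mul, abs_of_nonneg h0]
    calc r * |(star x * y).re| ≤ 1 * |(star x * y).re| := by gcongr
      _ ≤ _ := by rw [one_mul]; exact h2
  have h4 := (abs_le.1 h3).1
  nlinarith [sq_nonneg (‖x‖ - ‖y‖)]

/-- Window indicator. -/
noncomputable def win (p m₀ k n : ℤ) : ℝ := if k ∈ Finset.Ioc (n / p - m₀) (n / p) then 1 else 0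

lemma win_sum (p m₀ : ℤ) (hm₀ : 0 ≤ m₀) (K : Finset ℤ) (n : ℤ)
    (hK : Finset.Ioc (n / p - m₀) (n / p) ⊆ K) :
    ∑ k ∈ K, win p m₀ k n ^ 2 = m₀ := by
  have : ∀ k, win p m₀ k n ^ 2 = if k ∈ Finset.Ioc (n / p - m₀) (n / p) then 1 else 0 := by
    intro k; unfold win; split_ifs <;> norm_num
  simp only [this]
  rw [Finset.sum_ite_mem, Finset.inter_eq_right.2 hK]
  simp only [Finset.sum_const, Int.card_Ioc, nsmul_eq_mul, mul_one, sub_sub_cancel]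
  exact_mod_cast Int.toNat_of_nonneg hm₀

lemma win_sum2 (p m₀ : ℤ) (hp : 1 ≤ p) (hm₀ : 1 ≤ m₀) (K : Finset ℤ) (n n' : ℤ)
    (hn : n' = n + 1 ∨ n' = n - 1)
    (hK : Finset.Ioc (n / p - m₀) (n / p) ⊆ K) :
    (m₀ : ℝ) - 1 ≤ ∑ k ∈ K, win p m₀ k n * win p m₀ k n' ∧
      ∑ k ∈ K, win p m₀ k n * win p m₀ k n' ≤ m₀ := by
  have hd : n / p - 1 ≤ n' / p ∧ n' / p ≤ n / p + 1 := by
    have e1 : (n - p) / p = n / p - 1 := by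
      rw [Int.sub_ediv_of_dvd _ (dvd_refl p), Int.ediv_self (by omega)]
    have e2 : (n + p) / p = n / p + 1 := by
      rw [Int.add_ediv_of_dvd_right (dvd_refl p), Int.ediv_self (by omega)]
    rw [← e1, ← e2]
    exact ⟨Int.ediv_le_ediv (by omega) (by omega), Int.ediv_le_ediv (by omega) (by omega)⟩
  have : ∀ k, win p m₀ k n * win p m₀ k n' = if k ∈ Finset.Ioc (n / p - m₀) (n / p) ∩
      Finset.Ioc (n' / p - m₀) (n' / p) then 1 else 0 := by
    intro k; unfold win
    simp only [Finset.mem_inter]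
    split_ifs <;> simp_all
  simp only [this]
  rw [Finset.sum_ite_mem, Finset.inter_eq_right.2 (Finset.inter_subset_left.trans hK)]
  rw [Finset.Ioc_inter_Ioc]
  simp only [Finset.sum_const, Int.card_Ioc, nsmul_eq_mul, mul_one]
  constructor
  · have : m₀ - 1 ≤ (((n / p ⊓ n' / p) - ((n / p - m₀) ⊔ (n' / p - m₀))).toNat : ℤ) := by
      omega
    exact_mod_cast this
  · have : (((n / p ⊓ n' / p) - ((n / p - m₀) ⊔ (n' / p - m₀))).toNat : ℤ) ≤ m₀ := by
      omega
    exact_mod_cast this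

lemma form_average (V : ℤ → ℝ) (c : ℝ) (p m₀ : ℤ) (hp : 1 ≤ p) (hm₀ : 1 ≤ m₀)
    (h : ∀ (k : ℤ) (s : Finset ℤ) (f : ℤ → ℂ), (∀ n, n ∉ s → f n = 0) →
      (∀ n, f n ≠ 0 → k * p ≤ n ∧ n < k * p + m₀ * p) →
      c * ∑ n ∈ s, ‖f n‖ ^ 2 ≤ QF V s f) :
    FormGE V (c - 2 / m₀) := by
  intro s f hf
  set K := s.biUnion (fun n => Finset.Ioc (n / p - m₀) (n / p)) with hKdef
  have hK : ∀ n ∈ s, Finset.Ioc (n / p - m₀) (n / p) ⊆ K := fun n hn =>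
    Finset.subset_biUnion_of_mem (fun n => Finset.Ioc (n / p - m₀) (n / p)) hn
  have hk : ∀ k ∈ K, c * ∑ n ∈ s, win p m₀ k n ^ 2 * ‖f n‖ ^ 2 ≤
      ∑ n ∈ s, ((win p m₀ k n * win p m₀ k (n + 1)) * (star (f n) * f (n + 1)).re
        + (win p m₀ k n * win p m₀ k (n - 1)) * (star (f n) * f (n - 1)).re
        + win p m₀ k n ^ 2 * (V n * ‖f n‖ ^ 2)) := by
    intro k _
    have h1 := h k s (fun n => (win p m₀ k n : ℂ) * f n) (fun n hn => by simp [hf n hn]) (by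
      intro n hn
      have hw : k ∈ Finset.Ioc (n / p - m₀) (n / p) := by
        by_contra hcon
        apply hn
        simp only [win, if_neg hcon]
        simp
      rw [Finset.mem_Ioc] at hw
      have hp0 : 0 < p := by omega
      refine ⟨(Int.le_ediv_iff_mul_le hp0).1 hw.2, ?_⟩
      have : n / p < k + m₀ := by omega
      rw [Int.ediv_lt_iff_lt_mul hp0] at this
      linarith)
    have e1 : ∑ n ∈ s, win p m₀ k n ^ 2 * ‖f n‖ ^ 2
        = ∑ n ∈ s, ‖(win p m₀ k n : ℂ) * f n‖ ^ 2 := by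
      refine Finset.sum_congr rfl fun n _ => ?_
      rw [norm_mul, mul_pow, Complex.norm_real, Real.norm_eq_abs, sq_abs]
    rw [e1]
    refine h1.trans (le_of_eq ?_)
    unfold QF
    refine Finset.sum_congr rfl fun n _ => ?_
    rw [norm_mul, mul_pow, Complex.norm_real, Real.norm_eq_abs, sq_abs]
    simp
    ring
  have hsum := Finset.sum_le_sum hk
  rw [← Finset.mul_sum, Finset.sum_comm, Finset.sum_comm (s := K)] at hsum
  have hS : ∑ n ∈ s, ∑ k ∈ K, win p m₀ k n ^ 2 * ‖f n‖ ^ 2 = m₀ * ∑ n ∈ s, ‖f n‖ ^ 2 := by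
    rw [Finset.mul_sum]
    refine Finset.sum_congr rfl fun n hn => ?_
    rw [← Finset.sum_mul, win_sum p m₀ (by omega) K n (hK n hn)]
  rw [hS] at hsum
  have hR : ∑ n ∈ s, ∑ k ∈ K, ((win p m₀ k n * win p m₀ k (n + 1)) * (star (f n) * f (n + 1)).re
        + (win p m₀ k n * win p m₀ k (n - 1)) * (star (f n) * f (n - 1)).re
        + win p m₀ k n ^ 2 * (V n * ‖f n‖ ^ 2)) ≤
      ∑ n ∈ s, (m₀ * ((star (f n) * (f (n + 1) + f (n - 1))).re + V n * ‖f n‖ ^ 2)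
        + (‖f n‖ ^ 2 + ‖f (n + 1)‖ ^ 2 / 2 + ‖f (n + -1)‖ ^ 2 / 2)) := by
    refine Finset.sum_le_sum fun n hn => ?_
    rw [Finset.sum_add_distrib, Finset.sum_add_distrib, ← Finset.sum_mul, ← Finset.sum_mul,
      ← Finset.sum_mul, win_sum p m₀ (by omega) K n (hK n hn)]
    obtain ⟨a1, a2⟩ := win_sum2 p m₀ hp hm₀ K n (n + 1) (Or.inl rfl) (hK n hn)
    obtain ⟨b1, b2⟩ := win_sum2 p m₀ hp hm₀ K n (n - 1) (Or.inr rfl) (hK n hn)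
    have c1 := hop_bound (f n) (f (n + 1)) _ (sub_nonneg.2 a2) (by linarith)
    have c2 := hop_bound (f n) (f (n - 1)) _ (sub_nonneg.2 b2) (by linarith)
    rw [mul_add (star (f n)), Complex.add_re, ← sub_eq_add_neg]
    linarith
  have hT := hsum.trans hR
  rw [Finset.sum_add_distrib, ← Finset.mul_sum] at hT
  change _ ≤ (m₀ : ℝ) * QF V s f + _ at hT
  rw [Finset.sum_add_distrib, Finset.sum_add_distrib,
    ← Finset.sum_div, ← Finset.sum_div] at hT
  have s1 := shift_sum_le s f hf 1
  have s2 := shift_sum_le s f hf (-1)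
  have hm : (0 : ℝ) < m₀ := by exact_mod_cast (by omega : 0 < m₀)
  have hfin : (m₀ : ℝ) * ((c - 2 / m₀) * ∑ n ∈ s, ‖f n‖ ^ 2) ≤ m₀ * QF V s f := by
    have : (m₀ : ℝ) * ((c - 2 / m₀) * ∑ n ∈ s, ‖f n‖ ^ 2)
        = c * (m₀ * ∑ n ∈ s, ‖f n‖ ^ 2) - 2 * ∑ n ∈ s, ‖f n‖ ^ 2 := by
      field_simp
    rw [this]
    linarith
  exact le_of_mul_le_mul_left hfin hm

lemma periodic_mul (V : ℤ → ℝ) (p : ℕ) (hper : IsPeriodic V p) (j n : ℤ) :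
    V (n + j * p) = V n := by
  have : Function.Periodic V (p : ℤ) := hper
  simpa using this.int_mul j n

/-- lowering `V` by `2E₀/5` on `h` blocks out of `m + h` blocks of
length `p̃ = m₀ p` moves the bottom of the spectrum into `[3E₀/5, 4E₀/5]`. -/
theorem statement12 (V : ℤ → ℝ) (p : ℕ) (hp : 1 ≤ p) (hper : IsPeriodic V p)
    (H : lp (fun _ : ℤ => ℂ) 2 →L[ℂ] lp (fun _ : ℤ => ℂ) 2)
    (hH : IsSchrodingerOp V H)
    (E₀ : ℝ) (hE₀def : E₀ = specInf H) (hE₀pos : 0 < E₀)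
    (m₀ : ℕ) (hm₀ : 1 ≤ m₀) (hm₀big : 4 < E₀ / 5 * Real.sqrt m₀)
    (ptil : ℕ) (hptildef : ptil = m₀ * p)
    (Vhat : ℕ → ℕ → ℤ → ℝ)
    (Hhat : ℕ → ℕ → (lp (fun _ : ℤ => ℂ) 2 →L[ℂ] lp (fun _ : ℤ => ℂ) 2))
    (hVhat : ∀ m h : ℕ, 1 ≤ m → 1 ≤ h → ∀ n : ℤ,
      Vhat m h n =
        if n % (((m + h) * ptil : ℕ) : ℤ) < ((m * ptil : ℕ) : ℤ)
        then V n else V n - 2 * E₀ / 5)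
    (hHhat : ∀ m h : ℕ, 1 ≤ m → 1 ≤ h → IsSchrodingerOp (Vhat m h) (Hhat m h)) :
    ∀ m h : ℕ, 1 ≤ m → 1 ≤ h →
      3 * E₀ / 5 ≤ specInf (Hhat m h) ∧ specInf (Hhat m h) ≤ 4 * E₀ / 5 := by
 
  intro m h hm hh
  have hF : FormGE V E₀ := formGE_of_le_specInf V H hH E₀ hE₀def.le
  constructor
  · apply formGE_le_specInf _ _ (hHhat m h hm hh)
    have := formGE_lower V (Vhat m h) E₀ (2 * E₀ / 5) hF (by
      intro n
      rw [hVhat m h hm hh]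
      split_ifs <;> linarith)
    convert this using 1
    ring
  · by_contra hcon
    push Not at hcon
    have hG := formGE_of_le_specInf _ _ (hHhat m h hm hh) _ hcon.le
    have hav : FormGE V ((4 * E₀ / 5 + 2 * E₀ / 5) - 2 / ((m₀ : ℤ) : ℝ)) := by
      refine form_average V _ p m₀ (by exact_mod_cast hp) (by exact_mod_cast hm₀) ?_
      intro k s f hf hsupp
      refine form_window V (Vhat m h) _ _ hG (m * ptil) ((m + 1) * ptil) ((m * m₀ - k) * p)
        (periodic_mul V p hper _) ?_ s f hf ?_
      · intro n h1 h2
        rw [hVhat m h hm hh, if_neg]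
        have hpt : (0 : ℤ) ≤ ptil := by positivity
        have hh' : (1 : ℤ) ≤ h := by exact_mod_cast hh
        rw [Int.emod_eq_of_lt]
        · push_cast; linarith
        · exact le_trans (by positivity) h1
        · push_cast; nlinarith
      · intro n hn
        obtain ⟨h1, h2⟩ := hsupp n hn
        rw [hptildef]
        push_cast
        constructor <;> linarith
    have hle := formGE_le_specInf V H hH _ hav
    rw [← hE₀def] at hle
    have hm1 : (1 : ℝ) ≤ m₀ := by exact_mod_cast hm₀
    have hsq : Real.sqrt m₀ ≤ m₀ := by
      rw [Real.sqrt_le_left (by linarith)]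
      nlinarith
    have hb : 4 < E₀ / 5 * m₀ :=
      hm₀big.trans_le (mul_le_mul_of_nonneg_left hsq (by linarith))
    have : 2 / (m₀ : ℝ) < E₀ / 5 := by
      rw [div_lt_iff₀ (by linarith)]
      linarith
    push_cast at hle
    linarith
end

section
/- Let V : ℤ → ℝ be p-periodic (p ≥ 1) with Schrödinger operator H, and let E ∈ ℝ satisfy (E : ℂ) ∈ σ(H). Then lim_{N→∞} (1/N)·log‖A_N(E,V)‖ = 0. -/
open Filter Matrix

section helpers

open scoped Matrix.Norms.L2Operator

/-- One-step matrix over a commutative ring. -/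
def stepMat {R : Type*} [CommRing R] (x : R) (v : ℤ → R) (n : ℤ) : Matrix (Fin 2) (Fin 2) R :=
  !![x - v n, -1; 1, 0]

/-- Transfer matrix from site `n` over `N` steps. -/
def tmat {R : Type*} [CommRing R] (x : R) (v : ℤ → R) (n : ℤ) : ℕ → Matrix (Fin 2) (Fin 2) R
  | 0 => 1
  | N + 1 => stepMat x v (n + N) * tmat x v n N

lemma stepMat_det {R : Type*} [CommRing R] (x : R) (v : ℤ → R) (n : ℤ) :
    (stepMat x v n).det = 1 := by
  simp [stepMat, Matrix.det_fin_two]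

lemma tmat_det {R : Type*} [CommRing R] (x : R) (v : ℤ → R) (n : ℤ) (N : ℕ) :
    (tmat x v n N).det = 1 := by
  induction N with
  | zero => simp [tmat]
  | succ N ih => simp [tmat, stepMat_det, ih]

lemma tmat_add {R : Type*} [CommRing R] (x : R) (v : ℤ → R) (n : ℤ) (N M : ℕ) :
    tmat x v n (N + M) = tmat x v (n + N) M * tmat x v n N := by
  induction M with
  | zero => simp [tmat]
  | succ M ih =>
    rw [← add_assoc]
    simp only [tmat]
    rw [ih, Matrix.mul_assoc]
    push_cast
    rw [add_assoc]

lemma tmat_per {R : Type*} [CommRing R] (x : R) (v : ℤ → R) (q : ℤ)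
    (hv : ∀ n, v (n + q) = v n) (n : ℤ) (N : ℕ) :
    tmat x v (n + q) N = tmat x v n N := by
  induction N with
  | zero => simp [tmat]
  | succ N ih =>
    simp only [tmat]
    rw [ih]
    congr 1
    simp only [stepMat]
    rw [show n + q + (N : ℤ) = n + N + q by ring, hv]

lemma tmat_trace_succ {R : Type*} [CommRing R] (x : R) (v : ℤ → R) (p : ℕ)
    (hp : 1 ≤ p) (hv : ∀ n, v (n + (p : ℤ)) = v n) (n : ℤ) :
    (tmat x v (n + 1) p).trace = (tmat x v n p).trace := by
  obtain ⟨m, rfl⟩ : ∃ m, p = m + 1 := ⟨p - 1, by omega⟩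
  have h1 : tmat x v n (m + 1) = tmat x v (n + 1) m * stepMat x v n := by
    rw [add_comm m 1, tmat_add]
    simp [tmat]
  rw [h1, Matrix.trace_mul_comm]
  simp only [tmat]
  congr 2
  simp only [stepMat]
  rw [← hv n]
  push_cast
  rw [show n + 1 + (m : ℤ) = n + (m + 1) by ring]

lemma tmat_trace {R : Type*} [CommRing R] (x : R) (v : ℤ → R) (p : ℕ)
    (hp : 1 ≤ p) (hv : ∀ n, v (n + (p : ℤ)) = v n) (n : ℤ) :
    (tmat x v n p).trace = (tmat x v 0 p).trace := by
  induction n using Int.induction_on with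
  | zero => rfl
  | succ i ih => rw [tmat_trace_succ x v p hp hv, ih]
  | pred i ih =>
    rw [← ih, ← tmat_trace_succ x v p hp hv (-(i : ℤ) - 1)]
    simp

lemma tmat_map {R S : Type*} [CommRing R] [CommRing S] (f : R →+* S) (x : R) (v : ℤ → R)
    (n : ℤ) (N : ℕ) :
    (tmat x v n N).map f = tmat (f x) (fun k => f (v k)) n N := by
  induction N with
  | zero => simp [tmat]
  | succ N ih =>
    simp only [tmat]
    rw [Matrix.map_mul, ih]
    congr 1
    ext i j
    fin_cases i <;> fin_cases j <;> simp [stepMat]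

lemma transferMatrix_nat (V : ℤ → ℝ) (E : ℝ) (N : ℕ) :
    transferMatrix V E N = ((List.range N).map
      (fun n : ℕ => !![E - V ((N : ℤ) - ((n : ℤ) + 1)), -1; (1 : ℝ), 0])).prod := by
  unfold transferMatrix
  congr 1
  simp only [List.bind_eq_flatMap, List.pure_def, List.map_flatMap, List.map_cons, List.map_nil]
  generalize List.range N = l
  induction l with
  | nil => rfl
  | cons a l ih => rw [List.flatMap_cons, ih]; rfl

lemma transferMatrix_eq (V : ℤ → ℝ) (E : ℝ) (N : ℕ) :
    transferMatrix V E N = tmat E V 0 N := by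
  induction N with
  | zero => simp [transferMatrix, tmat]
  | succ N ih =>
    simp only [tmat]
    rw [← ih]
    rw [transferMatrix_nat, transferMatrix_nat]
    rw [List.range_succ_eq_map, List.map_cons, List.prod_cons, List.map_map]
    congr 1
    · simp [stepMat]
    · congr 2
      funext k
      simp only [Function.comp]
      push_cast
      rw [show (N : ℤ) + 1 - ((k : ℤ) + 1 + 1) = N - (k + 1) by ring]

/-- The algebraic Floquet identity. -/
lemma floquet_aux (v : ℤ → ℂ) (g : ℤ → Polynomial ℂ →ₗ[ℂ] ℂ)
    (hg : ∀ n Q, g n (Polynomial.X * Q) = g (n + 1) Q + g (n - 1) Q + v n * g n Q)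
    (n : ℤ) (N : ℕ) : ∀ Q : Polynomial ℂ,
    let P := tmat Polynomial.X (fun k => Polynomial.C (v k)) n N
    g (n + N) Q = g n (P 0 0 * Q) + g (n - 1) (P 0 1 * Q) ∧
    g (n + N - 1) Q = g n (P 1 0 * Q) + g (n - 1) (P 1 1 * Q) := by
  induction N with
  | zero => intro Q; simp [tmat]
  | succ N ih =>
    intro Q
    set P := tmat Polynomial.X (fun k => Polynomial.C (v k)) n N with hP
    have hs : ∀ Q, g (n + N + 1) Q
        = g (n + N) ((Polynomial.X - Polynomial.C (v (n + N))) * Q) - g (n + N - 1) Q := by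
      intro Q
      rw [sub_mul, map_sub, hg, Polynomial.C_mul', map_smul, smul_eq_mul]
      ring
    have h1 := ih ((Polynomial.X - Polynomial.C (v (n + N))) * Q)
    have h2 := ih Q
    simp only at h1 h2
    simp only [tmat, ← hP, stepMat, Matrix.mul_apply, Fin.sum_univ_two]
    constructor
    · push_cast
      rw [← add_assoc, hs, h1.1, h2.2]
      simp [add_mul, sub_mul, mul_sub]
      ring_nf
    · push_cast
      rw [← add_assoc, add_sub_cancel_right, h2.1]
      simp

lemma floquet (v : ℤ → ℂ) (p : ℕ) (hp : 1 ≤ p) (hv : ∀ n, v (n + (p : ℤ)) = v n)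
    (g : ℤ → Polynomial ℂ →ₗ[ℂ] ℂ)
    (hg : ∀ n Q, g n (Polynomial.X * Q) = g (n + 1) Q + g (n - 1) Q + v n * g n Q)
    (n : ℤ) :
    g n (tmat Polynomial.X (fun k => Polynomial.C (v k)) 0 p).trace
      = g (n + p) 1 + g (n - p) 1 := by
  obtain ⟨m, rfl⟩ : ∃ m, n = m + p := ⟨n - p, by ring⟩
  have hv' : ∀ n : ℤ, (fun k => Polynomial.C (v k)) (n + (p : ℤ))
      = (fun k => Polynomial.C (v k)) n := fun n => by simp only [hv]
  rw [← tmat_trace _ _ p hp hv' m]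
  have hd := tmat_det Polynomial.X (fun k => Polynomial.C (v k)) m p
  have hA := floquet_aux v g hg m p
  have hB := floquet_aux v g hg (m + p) p
  rw [tmat_per _ _ (p : ℤ) hv' m p] at hB
  set P := tmat Polynomial.X (fun k => Polynomial.C (v k)) m p with hP
  simp only at hA hB
  rw [(hB 1).1, (hA _).1, (hA _).1, (hA _).2, Matrix.trace_fin_two, add_sub_cancel_right]
  rw [Matrix.det_fin_two] at hd
  have e1 : g m (P 0 0 * (P 0 0 + P 1 1)) = g m (P 0 0 * (P 0 0 * 1)) + g m (P 1 0 * (P 0 1 * 1))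
      + g m 1 := by
    rw [← map_add, ← map_add]
    congr 1
    linear_combination hd
  have e2 : g (m - 1) (P 0 1 * (P 0 0 + P 1 1))
      = g (m - 1) (P 0 1 * (P 0 0 * 1)) + g (m - 1) (P 1 1 * (P 0 1 * 1)) := by
    rw [← map_add]
    congr 1
    ring
  rw [e1, e2]
  ring

lemma exists_shift (q : ℤ) (ψ : lp (fun _ : ℤ => ℂ) 2) :
    ∃ φ : lp (fun _ : ℤ => ℂ) 2, (∀ n, φ n = ψ (n + q)) ∧ ‖φ‖ = ‖ψ‖ := by
  have h2 : (0 : ℝ) < (2 : ENNReal).toReal := by norm_num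
  have hm : Memℓp (fun n : ℤ => ψ (n + q)) 2 := by
    apply memℓp_gen
    exact (Equiv.addRight q).summable_iff.mpr ((lp.memℓp ψ).summable h2)
  refine ⟨⟨fun n => ψ (n + q), hm⟩, fun n => rfl, ?_⟩
  rw [lp.norm_eq_tsum_rpow h2, lp.norm_eq_tsum_rpow h2]
  congr 1
  exact (Equiv.addRight q).tsum_eq (fun n => ‖ψ n‖ ^ (2 : ENNReal).toReal)

lemma trace_bound (V : ℤ → ℝ) (p : ℕ) (hp : 1 ≤ p) (hper : IsPeriodic V p)
    (H : lp (fun _ : ℤ => ℂ) 2 →L[ℂ] lp (fun _ : ℤ => ℂ) 2)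
    (hH : IsSchrodingerOp V H) (E : ℝ) (hE : (E : ℂ) ∈ spectrum ℂ H) :
    |(tmat E V 0 p).trace| ≤ 2 := by
  set D : Polynomial ℂ :=
    (tmat Polynomial.X (fun k => Polynomial.C ((V k : ℝ) : ℂ)) 0 p).trace with hD
  have hact : ∀ ψ n, (Polynomial.aeval H D ψ) n = ψ (n + p) + ψ (n - p) := by
    intro ψ n
    let g : ℤ → Polynomial ℂ →ₗ[ℂ] ℂ := fun n =>
      { toFun := fun Q => (Polynomial.aeval H Q ψ) n
        map_add' := by intro a b; simp
        map_smul' := by intro a b; simp }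
    have hg : ∀ n Q, g n (Polynomial.X * Q)
        = g (n + 1) Q + g (n - 1) Q + ((V n : ℝ) : ℂ) * g n Q := by
      intro n Q
      change (Polynomial.aeval H (Polynomial.X * Q) ψ) n = _
      rw [map_mul, Polynomial.aeval_X]
      exact hH _ n
    have := floquet (fun k => ((V k : ℝ) : ℂ)) p hp (fun n => by simp only [hper n]) g hg n
    have h1 : ∀ k, g k 1 = ψ k := by
      intro k
      change (Polynomial.aeval H (1 : Polynomial ℂ) ψ) k = _
      simp
    rw [h1, h1] at this
    exact this
  have hn : ‖Polynomial.aeval H D‖ ≤ 2 := by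
    refine ContinuousLinearMap.opNorm_le_bound _ (by norm_num) fun ψ => ?_
    obtain ⟨a, ha, ha'⟩ := exists_shift p ψ
    obtain ⟨b, hb, hb'⟩ := exists_shift (-p) ψ
    have : Polynomial.aeval H D ψ = a + b := by
      ext n
      rw [hact, lp.coeFn_add, Pi.add_apply, ha, hb]
      rfl
    rw [this]
    refine (norm_add_le _ _).trans ?_
    rw [ha', hb', two_mul]
  have hs : Polynomial.eval (E : ℂ) D ∈ spectrum ℂ (Polynomial.aeval H D) :=
    spectrum.subset_polynomial_aeval H D ⟨_, hE, rfl⟩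
  have hb := spectrum.norm_le_norm_mul_of_mem hs
  have h1 : ‖(1 : lp (fun _ : ℤ => ℂ) 2 →L[ℂ] lp (fun _ : ℤ => ℂ) 2)‖ ≤ 1 :=
    ContinuousLinearMap.norm_id_le
  have hev : Polynomial.eval (E : ℂ) D = (((tmat E V 0 p).trace : ℝ) : ℂ) := by
    have e1 := tmat_map (Polynomial.evalRingHom (E : ℂ)) Polynomial.X
      (fun k => Polynomial.C ((V k : ℝ) : ℂ)) 0 p
    have e2 := tmat_map Complex.ofRealHom E V 0 p
    simp only [Polynomial.coe_evalRingHom, Polynomial.eval_X, Polynomial.eval_C] at e1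
    simp only [Complex.ofRealHom_eq_coe] at e2
    rw [← e2] at e1
    have e3 := congrArg Matrix.trace e1
    simp only [Matrix.trace_fin_two, Matrix.map_apply] at e3
    rw [hD, Matrix.trace_fin_two, Matrix.trace_fin_two, Polynomial.eval_add]
    push_cast
    exact e3
  rw [hev, Complex.norm_real, Real.norm_eq_abs] at hb
  nlinarith [norm_nonneg (Polynomial.aeval H D)]

/-- Powers of an elliptic or parabolic matrix grow at most linearly. -/
lemma pow_growth (M : Matrix (Fin 2) (Fin 2) ℝ) (hdet : M.det = 1) (ht : |M.trace| ≤ 2) (k : ℕ) :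
    ‖M ^ k‖ ≤ (k + 1) * (‖M‖ + ‖(1 : Matrix (Fin 2) (Fin 2) ℝ)‖) := by
  have hsq : M * M = M.trace • M - 1 := by
    rw [Matrix.det_fin_two] at hdet
    rw [Matrix.trace_fin_two]
    ext i j
    fin_cases i <;> fin_cases j <;>
      simp [Matrix.mul_apply, Fin.sum_univ_two] <;> first | linear_combination -hdet | ring
  have ht' : M.trace ^ 2 ≤ 4 := by
    have := abs_le.mp ht
    nlinarith
  have key : ∃ a b : ℝ, M ^ k = a • M - b • 1 ∧ a ^ 2 - M.trace * a * b + b ^ 2 = 1 ∧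
      |a| ≤ k + 1 ∧ |b| ≤ k + 1 := by
    induction k with
    | zero => exact ⟨0, -1, by simp, by norm_num, by simp, by simp⟩
    | succ k ih =>
      obtain ⟨a, b, h1, h2, h3, h4⟩ := ih
      refine ⟨M.trace * a - b, a, ?_, by linear_combination h2, ?_, ?_⟩
      · rw [pow_succ, h1, sub_mul, smul_mul_assoc, hsq, smul_mul_assoc, one_mul]
        module
      · have hx : |M.trace * a - b - M.trace / 2 * a| ≤ 1 := by
          rw [← sq_le_one_iff_abs_le_one]
          nlinarith [mul_nonneg (sub_nonneg.mpr ht') (sq_nonneg a)]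
        have hy : |M.trace / 2 * a| ≤ |a| := by
          rw [abs_mul]
          have : |M.trace / 2| ≤ 1 := by
            rw [abs_div, abs_two]; linarith
          nlinarith [abs_nonneg a]
        have := abs_add_le (M.trace * a - b - M.trace / 2 * a) (M.trace / 2 * a)
        rw [sub_add_cancel] at this
        push_cast
        linarith
      · push_cast
        linarith
  obtain ⟨a, b, h1, -, h3, h4⟩ := key
  rw [h1]
  refine (norm_sub_le _ _).trans ?_
  rw [norm_smul, norm_smul, Real.norm_eq_abs, Real.norm_eq_abs, mul_add]
  gcongr

lemma entry_le (A : Matrix (Fin 2) (Fin 2) ℝ) (i j : Fin 2) : |A i j| ≤ ‖A‖ := by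
  have h := Matrix.l2_opNorm_mulVec A (EuclideanSpace.single j (1 : ℝ))
  have h2 := (PiLp.norm_apply_le (WithLp.toLp 2 (A *ᵥ (EuclideanSpace.single j (1 : ℝ)).ofLp)) i)
  simp at h h2
  exact h2.trans h

lemma norm_lower (A : Matrix (Fin 2) (Fin 2) ℝ) (hdet : A.det = 1) : 1 / 2 ≤ ‖A‖ := by
  rw [Matrix.det_fin_two] at hdet
  by_contra! hlt
  have e := fun i j => abs_le.mp ((entry_le A i j).trans hlt.le)
  have h1 := e 0 0
  have h2 := e 0 1
  have h3 := e 1 0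
  have h4 := e 1 1
  have a1 : A 0 0 * A 1 1 ≤ 1 / 4 := by nlinarith
  have a2 : -(1 / 4) ≤ A 0 1 * A 1 0 := by nlinarith
  linarith

lemma tmat_pow (V : ℤ → ℝ) (p : ℕ) (hper : IsPeriodic V p) (E : ℝ) (k : ℕ) :
    tmat E V 0 (p * k) = tmat E V 0 p ^ k ∧ ∀ r, tmat E V ((p * k : ℕ) : ℤ) r = tmat E V 0 r := by
  induction k with
  | zero => simp [tmat]
  | succ k ih =>
    constructor
    · rw [mul_add, mul_one, tmat_add, zero_add, ih.2, ih.1, pow_succ']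
    · intro r
      rw [mul_add, mul_one]
      push_cast
      rw [tmat_per _ _ _ hper]
      exact_mod_cast ih.2 r

lemma tmat_growth (V : ℤ → ℝ) (p : ℕ) (hp : 1 ≤ p) (hper : IsPeriodic V p) (E : ℝ)
    (ht : |(tmat E V 0 p).trace| ≤ 2) :
    ∃ C : ℝ, 0 < C ∧ ∀ N : ℕ, 1 ≤ N → ‖tmat E V 0 N‖ ≤ C * N := by
  set M := tmat E V 0 p with hM
  set B := ∑ r ∈ Finset.range p, ‖tmat E V 0 r‖ with hB
  set K := ‖M‖ + ‖(1 : Matrix (Fin 2) (Fin 2) ℝ)‖ with hK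
  have hB0 : 0 ≤ B := Finset.sum_nonneg fun _ _ => norm_nonneg _
  have hK0 : 0 ≤ K := by positivity
  refine ⟨B * (2 * K) + 1, by positivity, fun N hN => ?_⟩
  have hN' : (1 : ℝ) ≤ N := by exact_mod_cast hN
  have hdec : tmat E V 0 N = tmat E V 0 (N % p) * M ^ (N / p) := by
    conv_lhs => rw [← Nat.div_add_mod N p]
    rw [tmat_add, zero_add, (tmat_pow V p hper E _).2, (tmat_pow V p hper E _).1]
  have h1 : ‖tmat E V 0 (N % p)‖ ≤ B :=
    Finset.single_le_sum (f := fun r => ‖tmat E V 0 r‖) (fun _ _ => norm_nonneg _)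
      (Finset.mem_range.mpr (Nat.mod_lt _ hp))
  have h2 := pow_growth M (tmat_det _ _ _ _) ht (N / p)
  have h3 : ((N / p : ℕ) : ℝ) ≤ N := by exact_mod_cast Nat.div_le_self N p
  have h4 : ‖M ^ (N / p)‖ ≤ 2 * K * N := by
    refine h2.trans ?_
    nlinarith
  calc ‖tmat E V 0 N‖ ≤ ‖tmat E V 0 (N % p)‖ * ‖M ^ (N / p)‖ := by
        rw [hdec]; exact norm_mul_le _ _
    _ ≤ B * (2 * K * N) := by gcongr
    _ ≤ (B * (2 * K) + 1) * N := by nlinarith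

lemma opNorm_eq (A : Matrix (Fin 2) (Fin 2) ℝ) : opNorm A = ‖A‖ := rfl

lemma rate_tendsto (V : ℤ → ℝ) (p : ℕ) (hp : 1 ≤ p) (hper : IsPeriodic V p) (E : ℝ)
    (ht : |(tmat E V 0 p).trace| ≤ 2) :
    Filter.Tendsto (fun N : ℕ => logNormRate V E N) Filter.atTop (nhds 0) := by
  obtain ⟨C, hC, hCN⟩ := tmat_growth V p hp hper E ht
  have hl : Filter.Tendsto (fun N : ℕ => (1 / (N : ℝ)) * Real.log (1 / 2)) atTop (nhds 0) := by
    simpa using tendsto_one_div_atTop_nhds_zero_nat.mul_const (Real.log (1 / 2))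
  have hlog : Filter.Tendsto (fun N : ℕ => Real.log (N : ℝ) / N) atTop (nhds 0) := by
    have := (Real.tendsto_pow_log_div_mul_add_atTop 1 0 1 one_ne_zero).comp
      (tendsto_natCast_atTop_atTop (R := ℝ))
    simpa [Function.comp_def] using this
  have hu : Filter.Tendsto
      (fun N : ℕ => (1 / (N : ℝ)) * Real.log C + Real.log (N : ℝ) / N) atTop (nhds 0) := by
    simpa using (tendsto_one_div_atTop_nhds_zero_nat.mul_const (Real.log C)).add hlog
  refine tendsto_of_tendsto_of_tendsto_of_le_of_le' hl hu ?_ ?_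
  · filter_upwards with N
    unfold logNormRate
    rw [transferMatrix_eq, opNorm_eq]
    have := norm_lower _ (tmat_det E V 0 N)
    gcongr
  · filter_upwards [eventually_ge_atTop 1] with N hN
    unfold logNormRate
    rw [transferMatrix_eq, opNorm_eq]
    have h1 := norm_lower _ (tmat_det E V 0 N)
    have hN0 : (0 : ℝ) < N := by exact_mod_cast hN
    have h2 : Real.log ‖tmat E V 0 N‖ ≤ Real.log C + Real.log N := by
      rw [← Real.log_mul hC.ne' hN0.ne']
      exact Real.log_le_log (by linarith) (hCN N hN)
    calc (1 / (N : ℝ)) * Real.log ‖tmat E V 0 N‖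
        ≤ (1 / (N : ℝ)) * (Real.log C + Real.log N) := by gcongr
      _ = _ := by ring

end helpers

/-- for a periodic potential the Lyapunov exponent vanishes on the
spectrum: `(1/N) log‖A_N(E,V)‖ → 0`. -/
theorem statement14 (V : ℤ → ℝ) (p : ℕ) (hp : 1 ≤ p) (hper : IsPeriodic V p)
    (H : lp (fun _ : ℤ => ℂ) 2 →L[ℂ] lp (fun _ : ℤ => ℂ) 2)
    (hH : IsSchrodingerOp V H) (E : ℝ) (hE : (E : ℂ) ∈ spectrum ℂ H) :
    Filter.Tendsto (fun N : ℕ => logNormRate V E N) Filter.atTop (nhds 0) := by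
  exact rate_tendsto V p hp hper E (trace_bound V p hp hper H hH E hE)
end
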